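/- arXiv:2105.07056 — 2 statements merged into one kernel-verified Lean document; each statement's English description precedes it below -/
import Mathlib

section
/- For every integer s ≥ 1 there exists a constant c > 0, depending only on s, such that: for every 2π-periodic function f : ℝ → ℂ of class C^s with zero mean (∫_{−π}^{π} f(α) dα = 0), every even integer N ≥ 2 (with h = 2π/N), and every grid index j ∈ {−N/2+1, …, N/2}, |∂_α^{−1}f(α_j) − (S_h^{−1} f(α_·))(α_j)| ≤ c h^{s−1/2} ‖f‖_s, where ∂_α^{−1} f(α) = Σ_{k∈ℤ, k≠0} (f̂_k^e/(ik)) e^{ikα} is the zero-mean antiderivative of f and S_h^{−1} is applied to the discrete function of samples of f. -/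
open scoped BigOperators
open Finset

noncomputable section

/-- Grid spacing `h = 2π/N`. -/
def hgrid (N : ℤ) : ℝ := 2 * Real.pi / N

/-- Grid points `α_j = j h`. -/
def gridPt (N : ℤ) (j : ℤ) : ℝ := j * hgrid N

/-- Index set `{-N/2+1, …, N/2}`. -/
def idxs (N : ℤ) : Finset ℤ := Finset.Icc (-(N / 2) + 1) (N / 2)

/-- Discrete Fourier coefficient `f̂_k`. -/
def dft (N : ℤ) (f : ℤ → ℂ) (k : ℤ) : ℂ :=
  (N : ℂ)⁻¹ * ∑ j ∈ idxs N, f j * Complex.exp (-(Complex.I * (k : ℂ) * (gridPt N j : ℂ)))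

/-- Reconstruction of a discrete function from Fourier coefficients. -/
def idft (N : ℤ) (c : ℤ → ℂ) (j : ℤ) : ℂ :=
  ∑ k ∈ idxs N, c k * Complex.exp (Complex.I * (k : ℂ) * (gridPt N j : ℂ))

/-- The pseudo-spectral derivative `S_h`. -/
def Sh (N : ℤ) (f : ℤ → ℂ) : ℤ → ℂ :=
  idft N fun k => if k = N / 2 then 0 else Complex.I * (k : ℂ) * dft N f k

/-- The pseudo-spectral antiderivative `S_h⁻¹`. -/
def Shinv (N : ℤ) (f : ℤ → ℂ) : ℤ → ℂ :=
  idft N fun k => if k = 0 then 0 else dft N f k / (Complex.I * (k : ℂ))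

/-- The filtered discrete function `f^p`. -/
def filterP (N : ℤ) (ρ : ℝ → ℝ) (f : ℤ → ℂ) : ℤ → ℂ :=
  idft N fun k => (ρ (gridPt N k) : ℂ) * dft N f k

/-- The filtered derivative `D_h`. -/
def Dh (N : ℤ) (ρ : ℝ → ℝ) (f : ℤ → ℂ) : ℤ → ℂ :=
  idft N fun k => Complex.I * (k : ℂ) * (ρ (gridPt N k) : ℂ) * dft N f k

/-- Discrete `l²` norm. -/
def l2norm (N : ℤ) (f : ℤ → ℂ) : ℝ :=
  Real.sqrt (hgrid N * ∑ j ∈ idxs N, ‖f j‖ ^ 2)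

/-- Discrete Hilbert transform `H_h`. -/
def Hh (N : ℤ) (f : ℤ → ℂ) (i : ℤ) : ℂ :=
  ((hgrid N / Real.pi : ℝ) : ℂ) *
    ∑ j ∈ (idxs N).filter (fun j => Odd (j - i)),
      f j * (Real.cot ((gridPt N i - gridPt N j) / 2) : ℂ)

/-- Discrete inner product `(f,g)_h`. -/
def dip (N : ℤ) (f g : ℤ → ℂ) : ℂ :=
  (hgrid N : ℂ) * ∑ j ∈ idxs N, (starRingEnd ℂ) (f j) * g j

/-- Discrete mean `⟨f⟩_h`. -/
def dmean (N : ℤ) (f : ℤ → ℂ) : ℂ :=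
  (N : ℂ)⁻¹ * ∑ j ∈ idxs N, f j

/-- The discrete function of samples of a periodic function. -/
def samples (N : ℤ) (f : ℝ → ℂ) : ℤ → ℂ := fun j => f (gridPt N j)

/-- Fourier coefficient of a `2π`-periodic function. -/
def fourierCoeffP (f : ℝ → ℂ) (k : ℤ) : ℂ :=
  ((2 * Real.pi)⁻¹ : ℝ) * ∫ α in (-Real.pi)..Real.pi, f α * Complex.exp (-(Complex.I * (k : ℂ) * (α : ℂ)))

/-- Sobolev norm `‖f‖_s`. -/
def sobolevNorm (s : ℕ) (f : ℝ → ℂ) : ℝ :=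
  Real.sqrt (∑' k : ℤ, (1 + (k : ℝ) ^ 2) ^ s * ‖fourierCoeffP f k‖ ^ 2)

/-- A filter (cutoff) function for numerical filtering. -/
structure IsFilter (ρ : ℝ → ℝ) : Prop where
  even : ∀ x, ρ (-x) = ρ x
  nonneg : ∀ x, 0 ≤ ρ x
  smooth : ∃ r : ℕ, 2 < r ∧ ContDiff ℝ r ρ
  zero_at_pi : ρ Real.pi = 0
  zero_at_neg_pi : ρ (-Real.pi) = 0
  deriv_zero_at_pi : deriv ρ Real.pi = 0
  deriv_zero_at_neg_pi : deriv ρ (-Real.pi) = 0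
  one_near_zero : ∃ μ : ℝ, 0 < μ ∧ μ < 1 ∧ ∀ x : ℝ, |x| ≤ μ * Real.pi → ρ x = 1

/-- The zero-mean antiderivative `∂_α⁻¹ f` of a zero-mean periodic function. -/
def contAntideriv (f : ℝ → ℂ) (α : ℝ) : ℂ :=
  ∑' k : ℤ, if k = 0 then 0 else
    fourierCoeffP f k / (Complex.I * (k : ℂ)) * Complex.exp (Complex.I * (k : ℂ) * (α : ℂ))

/-! Expand `f` in its Fourier series. At a mode with frequency in `{-N/2+1, …, N/2}` the
pseudo-spectral antiderivative is exact; at any other mode it returns the exact antiderivative of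
the mode in that range with the same samples. Both the true and the computed antiderivative of a
mode are bounded by `1`, so the error is at most `2 ∑ |f̂_m|` over the frequencies `|m| ≥ N/2`.
Cauchy–Schwarz with the weight `(1 + m²)^s` bounds this sum by
`(∑_{|m| ≥ N/2} (1 + m²)^{-s})^{1/2} ‖f‖_s`, and the first factor is of order `h^{s-1/2}`. -/

/-! ### Fourier modes -/

/-- The Fourier mode `e^{ikx}` of frequency `k`. -/
def fourierMode (k : ℤ) (x : ℝ) : ℂ := Complex.exp (Complex.I * k * x)

theorem norm_fourierMode (k : ℤ) (x : ℝ) : ‖fourierMode k x‖ = 1 := by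
  rw [fourierMode, mul_assoc, ← Complex.ofReal_intCast, ← Complex.ofReal_mul,
    Complex.norm_exp_I_mul_ofReal]

theorem fourierMode_neg (k : ℤ) (x : ℝ) :
    fourierMode (-k) x = Complex.exp (-(Complex.I * k * x)) := by
  simp [fourierMode]

theorem fourier_coe_eq_fourierMode (k : ℤ) (x : ℝ) :
    fourier k (x : AddCircle (2 * Real.pi)) = fourierMode k x := by
  rw [fourier_coe_apply, fourierMode]
  congr 1
  push_cast
  field_simp

theorem periodic_fourierMode (k : ℤ) : Function.Periodic (fourierMode k) (2 * Real.pi) := by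
  intro x
  simp_rw [← fourier_coe_eq_fourierMode, AddCircle.coe_add_period]

theorem hasDerivAt_fourierMode (k : ℤ) (x : ℝ) :
    HasDerivAt (fourierMode k) (Complex.I * k * fourierMode k x) x := by
  have h : HasDerivAt (fun y : ℝ => Complex.I * k * y) (Complex.I * k) x := by
    simpa using Complex.ofRealCLM.hasDerivAt.const_mul (Complex.I * (k : ℂ))
  exact h.cexp.congr_deriv (mul_comm _ _)

/-- The zero-mean antiderivative of `fourierMode k`. For `k = 0` the division by zero yields `0`,
which is the convention for the constant mode in `Shinv` and `contAntideriv`. -/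
def modeAntideriv (k : ℤ) (x : ℝ) : ℂ := fourierMode k x / (Complex.I * k)

theorem norm_modeAntideriv_le_one (k : ℤ) (x : ℝ) : ‖modeAntideriv k x‖ ≤ 1 := by
  rcases eq_or_ne k 0 with rfl | hk
  · simp [modeAntideriv]
  · have hk' : (1 : ℝ) ≤ |(k : ℝ)| := by exact_mod_cast Int.one_le_abs hk
    simpa [modeAntideriv, norm_fourierMode] using inv_le_one_of_one_le₀ hk'

theorem contAntideriv_eq_tsum (f : ℝ → ℂ) (x : ℝ) :
    contAntideriv f x = ∑' k : ℤ, fourierCoeffP f k * modeAntideriv k x := by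
  refine tsum_congr fun k => ?_
  rcases eq_or_ne k 0 with rfl | hk
  · simp [modeAntideriv]
  · rw [if_neg hk, div_mul_eq_mul_div, mul_div_assoc, modeAntideriv, fourierMode]

theorem Shinv_eq_sum (N : ℤ) (g : ℤ → ℂ) (j : ℤ) :
    Shinv N g j = ∑ k ∈ idxs N, dft N g k * modeAntideriv k (gridPt N j) := by
  rw [Shinv, idft]
  refine Finset.sum_congr rfl fun k _ => ?_
  rcases eq_or_ne k 0 with rfl | hk
  · simp [modeAntideriv]
  · rw [if_neg hk, div_mul_eq_mul_div, mul_div_assoc, modeAntideriv, fourierMode]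

/-! ### Fourier coefficients of periodic functions -/

section FourierSeries

variable {f : ℝ → ℂ}

theorem fourierCoeffP_eq_integral_fourierMode (f : ℝ → ℂ) (k : ℤ) :
    fourierCoeffP f k =
      ((2 * Real.pi)⁻¹ : ℝ) * ∫ x in (-Real.pi)..Real.pi, fourierMode (-k) x * f x := by
  simp only [fourierCoeffP, fourierMode_neg, mul_comm (f _)]

theorem fourierCoeffP_deriv (hper : Function.Periodic f (2 * Real.pi))
    (hf : Differentiable ℝ f)
    (hf' : IntervalIntegrable (deriv f) MeasureTheory.volume (-Real.pi) Real.pi) (k : ℤ) :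
    fourierCoeffP (deriv f) k = Complex.I * k * fourierCoeffP f k := by
  have hmode : Continuous (fourierMode (-k)) :=
    continuous_iff_continuousAt.2 fun x => (hasDerivAt_fourierMode (-k) x).continuousAt
  have hends : fourierMode (-k) Real.pi * f Real.pi =
      fourierMode (-k) (-Real.pi) * f (-Real.pi) := by
    have h := ((periodic_fourierMode (-k)).mul hper) (-Real.pi)
    rwa [show -Real.pi + 2 * Real.pi = Real.pi by ring] at h
  have hparts := intervalIntegral.integral_mul_deriv_eq_deriv_mul
    (fun x _ => hasDerivAt_fourierMode (-k) x) (fun x _ => (hf x).hasDerivAt)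
    ((hmode.const_mul _).intervalIntegrable _ _) hf'
  rw [hends, sub_self, zero_sub] at hparts
  simp only [mul_assoc, intervalIntegral.integral_const_mul] at hparts
  rw [fourierCoeffP_eq_integral_fourierMode, fourierCoeffP_eq_integral_fourierMode, hparts]
  push_cast
  ring

theorem periodic_iteratedDeriv {F : Type*} [NormedAddCommGroup F] [NormedSpace ℝ F]
    {f : ℝ → F} {c : ℝ} (hper : Function.Periodic f c) (n : ℕ) :
    Function.Periodic (iteratedDeriv n f) c := fun x => by
  rw [← congrFun (iteratedDeriv_comp_add_const n f c) x, funext hper]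

theorem fourierCoeffP_iteratedDeriv (hper : Function.Periodic f (2 * Real.pi)) {n : ℕ}
    (hf : ContDiff ℝ n f) (k : ℤ) :
    fourierCoeffP (iteratedDeriv n f) k = (Complex.I * k) ^ n * fourierCoeffP f k := by
  induction n with
  | zero => simp
  | succ n ih =>
    have hdiff : Differentiable ℝ (iteratedDeriv n f) :=
      hf.differentiable_iteratedDeriv n (by exact_mod_cast n.lt_succ_self)
    have hcont : Continuous (deriv (iteratedDeriv n f)) := by
      rw [← iteratedDeriv_succ]
      exact hf.continuous_iteratedDeriv (n + 1) le_rfl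
    rw [iteratedDeriv_succ, fourierCoeffP_deriv (periodic_iteratedDeriv hper n) hdiff
      (hcont.intervalIntegrable _ _), ih (hf.of_le (by exact_mod_cast n.le_succ)), pow_succ']
    ring

local instance : Fact (0 < 2 * Real.pi) := ⟨Real.two_pi_pos⟩

/-- A continuous `2π`-periodic function as a continuous function on the circle `ℝ / 2πℤ`, the
form in which Mathlib develops Fourier series. -/
def circleLift (hper : Function.Periodic f (2 * Real.pi)) (hf : Continuous f) :
    C(AddCircle (2 * Real.pi), ℂ) :=
  ⟨hper.lift, continuous_coinduced_dom.2 hf⟩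

theorem circleLift_coe (hper : Function.Periodic f (2 * Real.pi)) (hf : Continuous f) (x : ℝ) :
    circleLift hper hf (x : AddCircle (2 * Real.pi)) = f x := rfl

theorem fourierCoeff_circleLift (hper : Function.Periodic f (2 * Real.pi)) (hf : Continuous f)
    (k : ℤ) : fourierCoeff (circleLift hper hf) k = fourierCoeffP f k := by
  rw [fourierCoeff_eq_intervalIntegral _ _ (-Real.pi), fourierCoeffP_eq_integral_fourierMode,
    Complex.real_smul, one_div, show -Real.pi + 2 * Real.pi = Real.pi by ring]
  simp only [fourier_coe_eq_fourierMode, circleLift_coe, smul_eq_mul]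

theorem summable_sq_norm_fourierCoeffP (hper : Function.Periodic f (2 * Real.pi))
    (hf : Continuous f) : Summable fun k : ℤ => ‖fourierCoeffP f k‖ ^ 2 := by
  simpa only [fourierCoeff_toLp, fourierCoeff_circleLift] using
    (hasSum_sq_fourierCoeff
      (ContinuousMap.toLp (E := ℂ) 2 AddCircle.haarAddCircle ℂ (circleLift hper hf))).summable

theorem hasSum_fourierCoeffP_mul_fourierMode (hper : Function.Periodic f (2 * Real.pi))
    (hf : Continuous f) (hsum : Summable (fourierCoeffP f)) (x : ℝ) :
    HasSum (fun k => fourierCoeffP f k * fourierMode k x) (f x) := by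
  have hsum' : Summable (fourierCoeff (circleLift hper hf)) :=
    hsum.congr fun k => (fourierCoeff_circleLift hper hf k).symm
  simpa only [fourierCoeff_circleLift, circleLift_coe, fourier_coe_eq_fourierMode,
    smul_eq_mul] using
    has_pointwise_sum_fourier_series_of_summable hsum' (x : AddCircle (2 * Real.pi))

theorem hasSum_contAntideriv (hsum : Summable (fourierCoeffP f)) (x : ℝ) :
    HasSum (fun k => fourierCoeffP f k * modeAntideriv k x) (contAntideriv f x) := by
  rw [contAntideriv_eq_tsum]
  refine (Summable.of_norm_bounded hsum.norm fun k => ?_).hasSum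
  rw [norm_mul]
  exact mul_le_of_le_one_right (norm_nonneg _) (norm_modeAntideriv_le_one k x)

end FourierSeries

/-! ### The pseudo-spectral antiderivative of a mode -/

section Grid

theorem geom_sum_Ico_int {K : Type*} [Field K] {w : K} (hw₀ : w ≠ 0) (hw₁ : w ≠ 1) {a b : ℤ}
    (hab : a ≤ b) : ∑ i ∈ Ico a b, w ^ i = (w ^ b - w ^ a) / (w - 1) := by
  have hw : w - 1 ≠ 0 := sub_ne_zero.2 hw₁
  induction b, hab using Int.leInduction with
  | base => simp
  | succ b hab ih =>
    rw [← sum_Ico_add_eq_sum_Ico_add_one hab, ih, zpow_add_one₀ hw₀]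
    field_simp
    ring

variable {N : ℤ}

theorem idxs_eq_Ico (hE : Even N) : idxs N = Ico (N / 2 + 1 - N) (N / 2 + 1 - N + N) := by
  ext k
  simp only [idxs, mem_Icc, mem_Ico]
  grind

theorem exists_mem_idxs_dvd_sub (hN : 0 < N) (hE : Even N) (m : ℤ) :
    ∃ r ∈ idxs N, N ∣ m - r := by
  refine ⟨toIcoMod hN (N / 2 + 1 - N) m, ?_, toIcoDiv hN (N / 2 + 1 - N) m, ?_⟩
  · rw [idxs_eq_Ico hE, ← Finset.mem_coe, coe_Ico]
    exact toIcoMod_mem_Ico hN _ m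
  · rw [self_sub_toIcoMod, smul_eq_mul, mul_comm]

theorem eq_of_mem_idxs_of_dvd_sub (hE : Even N) {k r : ℤ} (hk : k ∈ idxs N) (hr : r ∈ idxs N)
    (h : N ∣ k - r) : k = r := by
  rw [idxs_eq_Ico hE, mem_Ico] at hk hr
  exact sub_eq_zero.1 (Int.eq_zero_of_abs_lt_dvd h (abs_lt.2 ⟨by omega, by omega⟩))

/-- The root of unity `e^{ih}`, whose powers are the values of the Fourier modes on the grid. -/
def gridRoot (N : ℤ) : ℂ := Complex.exp (Complex.I * hgrid N)

theorem gridRoot_ne_zero (N : ℤ) : gridRoot N ≠ 0 := Complex.exp_ne_zero _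

theorem fourierMode_gridPt (N m j : ℤ) : fourierMode m (gridPt N j) = gridRoot N ^ (m * j) := by
  rw [fourierMode, gridRoot, ← Complex.exp_int_mul, gridPt]
  congr 1
  push_cast
  ring

theorem gridRoot_zpow_eq_one_iff (hN : N ≠ 0) (l : ℤ) : gridRoot N ^ l = 1 ↔ N ∣ l := by
  have hN' : (N : ℂ) ≠ 0 := by exact_mod_cast hN
  have hcancel (n : ℤ) : l * (Complex.I * hgrid N) = n * (2 * Real.pi * Complex.I) ↔
      l = N * n := by
    rw [← Int.cast_inj (α := ℂ), hgrid]
    push_cast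
    field_simp
  simp only [gridRoot, ← Complex.exp_int_mul, Complex.exp_eq_one_iff, hcancel]
  rfl

theorem sum_idxs_gridRoot_zpow (hN : 0 < N) (hE : Even N) (l : ℤ) :
    ∑ j ∈ idxs N, (gridRoot N ^ l) ^ j = if N ∣ l then (N : ℂ) else 0 := by
  rw [idxs_eq_Ico hE]
  split_ifs with h
  · have hcard : (N.toNat : ℂ) = N := by exact_mod_cast Int.toNat_of_nonneg hN.le
    simp [(gridRoot_zpow_eq_one_iff hN.ne' l).2 h, hcard]
  · have hl : gridRoot N ^ l ≠ 0 := zpow_ne_zero l (gridRoot_ne_zero N)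
    have hN1 : (gridRoot N ^ l) ^ N = 1 := by
      rw [← zpow_mul, gridRoot_zpow_eq_one_iff hN.ne']
      exact dvd_mul_left N l
    rw [geom_sum_Ico_int hl (mt (gridRoot_zpow_eq_one_iff hN.ne' l).1 h) (by omega),
      zpow_add₀ hl, hN1, mul_one, sub_self, zero_div]

theorem dft_samples_fourierMode (hN : 0 < N) (hE : Even N) (m k : ℤ) :
    dft N (samples N (fourierMode m)) k = if N ∣ m - k then 1 else 0 := by
  have hN' : (N : ℂ) ≠ 0 := by exact_mod_cast hN.ne'
  have hterm (j : ℤ) : samples N (fourierMode m) j *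
      Complex.exp (-(Complex.I * k * gridPt N j)) = (gridRoot N ^ (m - k)) ^ j := by
    rw [samples, ← fourierMode_neg, fourierMode_gridPt, fourierMode_gridPt,
      ← zpow_add₀ (gridRoot_ne_zero N), ← zpow_mul]
    congr 1
    ring
  simp only [dft, hterm, sum_idxs_gridRoot_zpow hN hE, mul_ite, mul_zero, inv_mul_cancel₀ hN']

theorem Shinv_samples_fourierMode (hN : 0 < N) (hE : Even N) {m r : ℤ} (hr : r ∈ idxs N)
    (hmr : N ∣ m - r) (j : ℤ) :
    Shinv N (samples N (fourierMode m)) j = modeAntideriv r (gridPt N j) := by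
  rw [Shinv_eq_sum, sum_eq_single_of_mem r hr fun k hk hkr => ?_]
  · rw [dft_samples_fourierMode hN hE, if_pos hmr, one_mul]
  · have hmk : ¬N ∣ m - k := fun hmk =>
      hkr (eq_of_mem_idxs_of_dvd_sub hE hk hr (by simpa using dvd_sub hmr hmk))
    rw [dft_samples_fourierMode hN hE, if_neg hmk, zero_mul]

theorem norm_Shinv_samples_fourierMode_le_one (hN : 0 < N) (hE : Even N) (m j : ℤ) :
    ‖Shinv N (samples N (fourierMode m)) j‖ ≤ 1 := by
  obtain ⟨r, hr, hmr⟩ := exists_mem_idxs_dvd_sub hN hE m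
  rw [Shinv_samples_fourierMode hN hE hr hmr]
  exact norm_modeAntideriv_le_one r _

/-- The error at `α_j` of the pseudo-spectral antiderivative applied to `fourierMode m`. -/
def modeError (N j m : ℤ) : ℂ :=
  modeAntideriv m (gridPt N j) - Shinv N (samples N (fourierMode m)) j

theorem modeError_eq_zero_of_mem_idxs (hN : 0 < N) (hE : Even N) (j : ℤ) {m : ℤ}
    (hm : m ∈ idxs N) : modeError N j m = 0 := by
  rw [modeError, Shinv_samples_fourierMode hN hE hm (by simp), sub_self]

theorem norm_modeError_le_two (hN : 0 < N) (hE : Even N) (j m : ℤ) : ‖modeError N j m‖ ≤ 2 :=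
  calc ‖modeError N j m‖ ≤ 1 + 1 :=
        norm_sub_le_of_le (norm_modeAntideriv_le_one m _)
          (norm_Shinv_samples_fourierMode_le_one hN hE m j)
    _ = 2 := one_add_one_eq_two

end Grid

/-! ### Superposition of modes -/

section Superposition

variable {ι : Type*} {N : ℤ} {a : ι → ℂ} {e : ι → ℤ → ℂ} {g : ℤ → ℂ}

theorem hasSum_dft (h : ∀ i ∈ idxs N, HasSum (fun n => a n * e n i) (g i)) (k : ℤ) :
    HasSum (fun n => a n * dft N (e n) k) (dft N g k) := by
  have hsum := (hasSum_sum fun i hi => (h i hi).mul_right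
    (Complex.exp (-(Complex.I * k * gridPt N i)))).mul_left (N : ℂ)⁻¹
  refine hsum.congr_fun fun n => ?_
  simp only [dft, mul_sum]
  exact sum_congr rfl fun i _ => by ring

theorem hasSum_Shinv (h : ∀ i ∈ idxs N, HasSum (fun n => a n * e n i) (g i)) (j : ℤ) :
    HasSum (fun n => a n * Shinv N (e n) j) (Shinv N g j) := by
  simp only [Shinv_eq_sum, mul_sum, ← mul_assoc (a _)]
  exact hasSum_sum fun k _ => (hasSum_dft h k).mul_right _

theorem hasSum_antideriv_error {f : ℝ → ℂ} (hper : Function.Periodic f (2 * Real.pi))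
    (hf : Continuous f) (hsum : Summable (fourierCoeffP f)) (N j : ℤ) :
    HasSum (fun m => fourierCoeffP f m * modeError N j m)
      (contAntideriv f (gridPt N j) - Shinv N (samples N f) j) := by
  simp only [modeError, mul_sub]
  exact (hasSum_contAntideriv hsum _).sub
    (hasSum_Shinv (fun i _ => hasSum_fourierCoeffP_mul_fourierMode hper hf hsum _) j)

end Superposition

/-! ### Decay of the Sobolev weights -/

theorem summable_and_tsum_le_sqrt_mul_sqrt {ι : Type*} {r u v : ι → ℝ} (hr : 0 ≤ r) (hu : 0 ≤ u)
    (hv : 0 ≤ v) (hruv : ∀ i, r i ^ 2 ≤ u i * v i) (hus : Summable u) (hvs : Summable v) :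
    Summable r ∧ ∑' i, r i ≤ √(∑' i, u i) * √(∑' i, v i) := by
  have hbound (F : Finset ι) : ∑ i ∈ F, r i ≤ √(∑' i, u i) * √(∑' i, v i) := by
    rw [← Real.sqrt_mul (tsum_nonneg hu)]
    refine Real.le_sqrt_of_sq_le ?_
    calc (∑ i ∈ F, r i) ^ 2 ≤ (∑ i ∈ F, u i) * ∑ i ∈ F, v i :=
          sum_sq_le_sum_mul_sum_of_sq_le_mul F (fun i _ => hu i) (fun i _ => hv i)
            fun i _ => hruv i
      _ ≤ (∑' i, u i) * ∑' i, v i :=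
          mul_le_mul (hus.sum_le_tsum F fun i _ => hu i) (hvs.sum_le_tsum F fun i _ => hv i)
            (sum_nonneg fun i _ => hv i) (tsum_nonneg hu)
  exact ⟨summable_of_sum_le hr hbound, Real.tsum_le_of_sum_le hr hbound⟩

/-- The frequencies of modulus greater than `n`. -/
def highFreq (n : ℕ) : Set ℤ := {m | n < m.natAbs}

theorem hasSum_int_of_hasSum_natAbs {G : Type*} [AddCommGroup G] [TopologicalSpace G]
    [IsTopologicalAddGroup G] {u : ℕ → G} {a : G} (hu : HasSum u a) :
    HasSum (fun m : ℤ => u m.natAbs) (a + a - u 0) :=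
  HasSum.of_nat_of_neg (by simpa using hu) (by simpa using hu)

theorem tsum_highFreq_inv_sq_le (n : ℕ) :
    ∑' m : highFreq n, ((m : ℝ) ^ 2)⁻¹ ≤ 4 * ((n : ℝ) + 1)⁻¹ := by
  set u : ℕ → ℝ := fun i => if n < i then ((i : ℝ) ^ 2)⁻¹ else 0 with hu
  have hu0 (i : ℕ) : 0 ≤ u i := by
    simp only [hu]
    positivity
  have hpartial (k : ℕ) : ∑ i ∈ range k, u i ≤ 2 * ((n : ℝ) + 1)⁻¹ := by
    have hIoo : (range k).filter (n < ·) = Ioo n k := by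
      ext i
      simp [and_comm]
    rw [← sum_filter, hIoo, ← div_eq_mul_inv]
    exact sum_Ioo_inv_sq_le n k
  have htail : ∑' m : highFreq n, ((m : ℝ) ^ 2)⁻¹ = ∑' m : ℤ, u m.natAbs := by
    rw [tsum_subtype (highFreq n) fun m : ℤ => ((m : ℝ) ^ 2)⁻¹]
    refine tsum_congr fun m => ?_
    simp [hu, Set.indicator_apply, highFreq]
  calc ∑' m : highFreq n, ((m : ℝ) ^ 2)⁻¹ = ∑' i, u i + ∑' i, u i - u 0 :=
        htail.trans
          (hasSum_int_of_hasSum_natAbs (summable_of_sum_range_le hu0 hpartial).hasSum).tsum_eq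
    _ ≤ 2 * ((n : ℝ) + 1)⁻¹ + 2 * ((n : ℝ) + 1)⁻¹ := by
        linarith [Real.tsum_le_of_sum_range_le hu0 hpartial, hu0 0]
    _ = 4 * ((n : ℝ) + 1)⁻¹ := by ring

theorem inv_one_add_sq_pow_succ_le {x y : ℝ} (hy : 0 < y) (hyx : y ≤ |x|) (t : ℕ) :
    ((1 + x ^ 2) ^ (t + 1))⁻¹ ≤ y⁻¹ ^ (2 * t) * (x ^ 2)⁻¹ := by
  have hsq : y ^ 2 ≤ x ^ 2 := by
    rw [← sq_abs x]
    gcongr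
  have hx : 0 < x ^ 2 := (by positivity : 0 < y ^ 2).trans_le hsq
  rw [inv_pow, ← mul_inv, pow_succ, pow_mul]
  gcongr <;> linarith

theorem summable_inv_one_add_sq_pow {s : ℕ} (hs : 1 ≤ s) :
    Summable fun m : ℤ => ((1 + (m : ℝ) ^ 2) ^ s)⁻¹ := by
  refine Summable.of_norm_bounded_eventually (Real.summable_one_div_int_pow.2 one_lt_two) ?_
  filter_upwards [(Set.finite_singleton (0 : ℤ)).compl_mem_cofinite] with m hm
  have hm0 : (0 : ℝ) < (m : ℝ) ^ 2 := by positivity [show m ≠ 0 from hm]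
  rw [Real.norm_of_nonneg (by positivity), one_div]
  gcongr
  calc (m : ℝ) ^ 2 ≤ 1 + (m : ℝ) ^ 2 := by linarith
    _ ≤ (1 + (m : ℝ) ^ 2) ^ s := le_self_pow₀ (by linarith) (by omega)

theorem tsum_highFreq_inv_one_add_sq_pow_le {s : ℕ} (hs : 1 ≤ s) (n : ℕ) :
    ∑' m : highFreq n, ((1 + (m : ℝ) ^ 2) ^ s)⁻¹ ≤ 4 * ((n : ℝ) + 1)⁻¹ ^ (2 * s - 1) := by
  obtain ⟨t, rfl⟩ := Nat.exists_eq_add_of_le' hs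
  have hinv : Summable fun m : ℤ => ((m : ℝ) ^ 2)⁻¹ := by
    simpa using Real.summable_one_div_int_pow.2 one_lt_two
  have hle (m : highFreq n) : (n : ℝ) + 1 ≤ |((m : ℤ) : ℝ)| := by
    rw [← Int.cast_abs, Int.abs_eq_natAbs]
    exact_mod_cast m.2
  calc ∑' m : highFreq n, ((1 + (m : ℝ) ^ 2) ^ (t + 1))⁻¹
      ≤ ∑' m : highFreq n, ((n : ℝ) + 1)⁻¹ ^ (2 * t) * ((m : ℝ) ^ 2)⁻¹ :=
        ((summable_inv_one_add_sq_pow hs).subtype _).tsum_le_tsum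
          (fun m => inv_one_add_sq_pow_succ_le (by positivity) (hle m) t)
          ((hinv.subtype _).mul_left _)
    _ = ((n : ℝ) + 1)⁻¹ ^ (2 * t) * ∑' m : highFreq n, ((m : ℝ) ^ 2)⁻¹ := tsum_mul_left
    _ ≤ ((n : ℝ) + 1)⁻¹ ^ (2 * t) * (4 * ((n : ℝ) + 1)⁻¹) := by
        gcongr
        exact tsum_highFreq_inv_sq_le n
    _ = 4 * ((n : ℝ) + 1)⁻¹ ^ (2 * (t + 1) - 1) := by
        rw [show 2 * (t + 1) - 1 = 2 * t + 1 by omega, pow_succ]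
        ring

theorem inv_add_one_le_hgrid (n : ℕ) : ((n : ℝ) + 1)⁻¹ ≤ hgrid (2 * (n + 1)) := by
  have hgrid_eq : hgrid (2 * (n + 1)) = Real.pi * ((n : ℝ) + 1)⁻¹ := by
    rw [hgrid]
    push_cast
    field_simp
  rw [hgrid_eq]
  exact le_mul_of_one_le_left (by positivity) (by linarith [Real.pi_gt_three])

theorem sqrt_pow_two_mul_sub_one {x : ℝ} (hx : 0 ≤ x) {s : ℕ} (hs : 1 ≤ s) :
    √(x ^ (2 * s - 1)) = x ^ ((s : ℝ) - 1 / 2) := by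
  rw [Real.sqrt_eq_rpow, ← Real.rpow_natCast_mul hx, Nat.cast_sub (by omega)]
  congr 1
  push_cast
  ring

theorem sqrt_tsum_highFreq_inv_one_add_sq_pow_le {s : ℕ} (hs : 1 ≤ s) (n : ℕ) :
    √(∑' m : highFreq n, ((1 + (m : ℝ) ^ 2) ^ s)⁻¹) ≤
      2 * hgrid (2 * (n + 1)) ^ ((s : ℝ) - 1 / 2) := by
  have hgrid_nonneg : 0 ≤ hgrid (2 * (n + 1)) :=
    (by positivity : (0 : ℝ) ≤ ((n : ℝ) + 1)⁻¹).trans (inv_add_one_le_hgrid n)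
  calc √(∑' m : highFreq n, ((1 + (m : ℝ) ^ 2) ^ s)⁻¹)
      ≤ √(2 ^ 2 * hgrid (2 * (n + 1)) ^ (2 * s - 1)) := by
        refine Real.sqrt_le_sqrt ((tsum_highFreq_inv_one_add_sq_pow_le hs n).trans ?_)
        rw [show (2 : ℝ) ^ 2 = 4 by norm_num]
        gcongr
        exact inv_add_one_le_hgrid n
    _ = 2 * hgrid (2 * (n + 1)) ^ ((s : ℝ) - 1 / 2) := by
        rw [Real.sqrt_mul (by positivity), Real.sqrt_sq zero_le_two,
          sqrt_pow_two_mul_sub_one hgrid_nonneg hs]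

/-! ### Functions of Sobolev regularity -/

section Sobolev

variable {s : ℕ} {f : ℝ → ℂ}

/-- Finiteness of the Sobolev norm, i.e. membership in the periodic Sobolev space `H^s`. Without it
the series in `sobolevNorm` takes the junk value `0`. -/
def MemSobolev (s : ℕ) (f : ℝ → ℂ) : Prop :=
  Summable fun k : ℤ => (1 + (k : ℝ) ^ 2) ^ s * ‖fourierCoeffP f k‖ ^ 2

theorem memSobolev_of_contDiff (hper : Function.Periodic f (2 * Real.pi))
    (hf : ContDiff ℝ s f) : MemSobolev s f := by
  have hparseval := (summable_sq_norm_fourierCoeffP hper hf.continuous).add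
    (summable_sq_norm_fourierCoeffP (periodic_iteratedDeriv hper s)
      (hf.continuous_iteratedDeriv s le_rfl))
  refine (hparseval.mul_left (2 ^ (s - 1))).of_nonneg_of_le (fun k => by positivity) fun k => ?_
  calc (1 + (k : ℝ) ^ 2) ^ s * ‖fourierCoeffP f k‖ ^ 2
      ≤ 2 ^ (s - 1) * (1 ^ s + ((k : ℝ) ^ 2) ^ s) * ‖fourierCoeffP f k‖ ^ 2 := by
        gcongr
        exact add_pow_le zero_le_one (sq_nonneg _) s
    _ = 2 ^ (s - 1) *
          (‖fourierCoeffP f k‖ ^ 2 + ‖fourierCoeffP (iteratedDeriv s f) k‖ ^ 2) := by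
        rw [fourierCoeffP_iteratedDeriv hper hf]
        rw [norm_mul, norm_pow, norm_mul, Complex.norm_I, one_mul, Complex.norm_intCast, one_pow,
          mul_pow, ← sq_abs (k : ℝ)]
        ring

theorem MemSobolev.summable_and_tsum_norm_fourierCoeffP_le (hf : MemSobolev s f) (hs : 1 ≤ s)
    (A : Set ℤ) :
    Summable (fun m : A => ‖fourierCoeffP f m‖) ∧
      ∑' m : A, ‖fourierCoeffP f m‖ ≤
        √(∑' m : A, ((1 + (m : ℝ) ^ 2) ^ s)⁻¹) * sobolevNorm s f := by
  have hweight (m : A) : (1 + (m : ℝ) ^ 2) ^ s ≠ 0 := by positivity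
  obtain ⟨hsum, hle⟩ := summable_and_tsum_le_sqrt_mul_sqrt (fun _ : A => norm_nonneg _)
    (fun m : A => by positivity) (fun m : A => by positivity)
    (fun m : A => (inv_mul_cancel_left₀ (hweight m) (‖fourierCoeffP f m‖ ^ 2)).ge)
    ((summable_inv_one_add_sq_pow hs).subtype A) (hf.subtype A)
  refine ⟨hsum, hle.trans ?_⟩
  unfold sobolevNorm
  gcongr
  exact hf.tsum_subtype_le _ A fun m => by positivity

theorem MemSobolev.summable_fourierCoeffP (hf : MemSobolev s f) (hs : 1 ≤ s) :
    Summable (fourierCoeffP f) :=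
  .of_norm <| (Equiv.Set.univ ℤ).summable_iff.1
    (hf.summable_and_tsum_norm_fourierCoeffP_le hs Set.univ).1

end Sobolev

/-! ### Aliasing error -/

theorem mem_idxs_of_notMem_highFreq {n : ℕ} {m : ℤ} (hm : m ∉ highFreq n) :
    m ∈ idxs (2 * (n + 1)) := by
  have hm' : m.natAbs ≤ n := not_lt.1 hm
  rw [idxs, mem_Icc]
  omega

theorem support_mul_modeError_subset_highFreq (a : ℤ → ℂ) (n : ℕ) (j : ℤ) :
    (Function.support fun m => a m * modeError (2 * (n + 1)) j m) ⊆ highFreq n := by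
  refine fun m hm => by_contra fun hlow => right_ne_zero_of_mul hm ?_
  exact modeError_eq_zero_of_mem_idxs (by omega) (even_two_mul _) j
    (mem_idxs_of_notMem_highFreq hlow)

theorem norm_antideriv_error_le_tsum_highFreq {f : ℝ → ℂ}
    (hper : Function.Periodic f (2 * Real.pi)) (hf : Continuous f)
    (hsum : Summable (fourierCoeffP f)) (n : ℕ) (j : ℤ) :
    ‖contAntideriv f (gridPt (2 * (n + 1)) j) -
        Shinv (2 * (n + 1)) (samples (2 * (n + 1)) f) j‖ ≤
      2 * ∑' m : highFreq n, ‖fourierCoeffP f m‖ := by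
  have herror := (hasSum_subtype_iff_of_support_subset
    (support_mul_modeError_subset_highFreq (fourierCoeffP f) n j)).2
    (hasSum_antideriv_error hper hf hsum (2 * (n + 1)) j)
  refine herror.norm_le_of_bounded ((hsum.norm.subtype (highFreq n)).hasSum.mul_left 2) fun m => ?_
  calc ‖fourierCoeffP f m * modeError (2 * (n + 1)) j m‖
      = ‖modeError (2 * (n + 1)) j m‖ * ‖fourierCoeffP f m‖ := by rw [norm_mul, mul_comm]
    _ ≤ 2 * ‖fourierCoeffP f m‖ := by
        gcongr
        exact norm_modeError_le_two (by omega) (even_two_mul _) j m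

theorem pseudospectral_antiderivative_accuracy_general {s : ℕ} (hs : 1 ≤ s) {f : ℝ → ℂ}
    (hper : Function.Periodic f (2 * Real.pi)) (hf : Continuous f) (hmem : MemSobolev s f)
    {N : ℤ} (hN : 0 < N) (hE : Even N) (j : ℤ) :
    ‖contAntideriv f (gridPt N j) - Shinv N (samples N f) j‖ ≤
      4 * hgrid N ^ ((s : ℝ) - 1 / 2) * sobolevNorm s f := by
  obtain ⟨n, rfl⟩ : ∃ n : ℕ, N = 2 * (n + 1) := ⟨(N / 2 - 1).toNat, by grind⟩
  calc ‖contAntideriv f (gridPt (2 * (n + 1)) j) -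
          Shinv (2 * (n + 1)) (samples (2 * (n + 1)) f) j‖
      ≤ 2 * ∑' m : highFreq n, ‖fourierCoeffP f m‖ :=
        norm_antideriv_error_le_tsum_highFreq hper hf (hmem.summable_fourierCoeffP hs) n j
    _ ≤ 2 * (√(∑' m : highFreq n, ((1 + (m : ℝ) ^ 2) ^ s)⁻¹) * sobolevNorm s f) := by
        gcongr
        exact (hmem.summable_and_tsum_norm_fourierCoeffP_le hs (highFreq n)).2
    _ ≤ 2 * (2 * hgrid (2 * (n + 1)) ^ ((s : ℝ) - 1 / 2) * sobolevNorm s f) := by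
        gcongr
        · exact Real.sqrt_nonneg _
        · exact sqrt_tsum_highFreq_inv_one_add_sq_pow_le hs n
    _ = 4 * hgrid (2 * (n + 1)) ^ ((s : ℝ) - 1 / 2) * sobolevNorm s f := by ring

/-- Lemma 5.2: spectral accuracy of the pseudo-spectral antiderivative. -/
theorem pseudospectral_antiderivative_accuracy (s : ℕ) (hs : 1 ≤ s) :
    ∃ c : ℝ, 0 < c ∧ ∀ f : ℝ → ℂ, Function.Periodic f (2 * Real.pi) →
      ContDiff ℝ (s : ℕ) f → (∫ α in (-Real.pi)..Real.pi, f α) = 0 →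
      ∀ N : ℤ, 2 ≤ N → Even N → ∀ j ∈ idxs N,
        ‖contAntideriv f (gridPt N j) - Shinv N (samples N f) j‖ ≤
          c * hgrid N ^ ((s : ℝ) - 1 / 2) * sobolevNorm s f :=
  ⟨4, four_pos, fun _ hper hf _ _ hN hE j _ => pseudospectral_antiderivative_accuracy_general hs
    hper hf.continuous (memSobolev_of_contDiff hper hf) (by omega) hE j⟩

end
end

section
/- Let f : ℝ² → ℂ be 2π-periodic in each variable and of class C⁴, and let ρ be a filter function. For a discrete function φ define R_h(φ)_i = 2h Σ_{j=−N/2+1, (j−i) odd}^{N/2} f(α_i, α_j) φ_j. Then there exists a constant c > 0, depending only on f and ρ and not on N or φ, such that for every even integer N ≥ 2, every discrete function φ, and every k ∈ {0, 1, 2}: ‖D_h^k(R_h(φ^p))‖_{l²} ≤ c ‖φ‖_{l²} and ‖R_h((S_h^k φ)^p)‖_{l²} ≤ c ‖φ‖_{l²}. -/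
open scoped BigOperators
open Finset

noncomputable section

/-- The discrete operator `R_h` with smooth kernel `f`, using the alternate-point
trapezoidal rule. -/
def Rh (N : ℤ) (f : ℝ × ℝ → ℂ) (φ : ℤ → ℂ) (i : ℤ) : ℂ :=
  2 * (hgrid N : ℂ) * ∑ j ∈ (idxs N).filter (fun j => Odd (j - i)),
    f (gridPt N i, gridPt N j) * φ j

/-!
Let `δ` be the central difference quotient on the grid. Since `δ` reaches two nodes of the same
parity, `δ^k` maps the zero-extended alternate-point kernel of `R_h` to the kernel sampling the
`k`-fold central difference of `f` at the points of parity shifted by `k`; this is bounded by the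
`k`-th derivative of `f`. Hence `δ^k R_h` and, after summation by parts, `R_h δ^k` are bounded on
`l²` uniformly in the grid. On the Fourier side `δ` has symbol `i sin (m h) / h`, which degenerates
at the highest frequencies `m h ≈ ±π`. There the filter helps: if `ρ` vanishes at `±π` together with
its derivatives of order less than `k`, then `|x|^k |ρ x| ≤ C |sin x|^k` on `[-π, π]`, so filtered
spectral derivatives are dominated by powers of `δ`, and Parseval's identity concludes.
-/

section CentralDiff

variable {E G : Type*}

/-- The central difference quotient `(F (p + v) - F (p - v)) / (2 h)`. The step `v` and the spacing
`h` are separate so that the same notion serves grid functions (`E = ℤ`, `v = 1`) and functions on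
the plane (`v` of length `h`). -/
def centralDiff [AddGroup E] [AddGroup G] [SMul ℝ G] (h : ℝ) (v : E) (F : E → G) (p : E) : G :=
  (2 * h)⁻¹ • (F (p + v) - F (p - v))

theorem centralDiff_iterate_periodic [AddCommGroup E] [AddGroup G] [SMul ℝ G] {F : E → G} {c : E}
    (hF : Function.Periodic F c) (h : ℝ) (v : E) (k : ℕ) :
    Function.Periodic ((centralDiff h v)^[k] F) c := by
  induction k with
  | zero => exact hF
  | succ k ih =>
    intro p
    simp only [Function.iterate_succ_apply', centralDiff, add_right_comm p c v,
      add_sub_right_comm p c v, ih _]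

-- Both neighbours of `n` have the same parity, so differencing the samples of `F` along every
-- second point of a line gives such samples again, along the complementary points.
theorem centralDiff_iterate_ite_odd [AddCommGroup E] [AddCommGroup G] [Module ℝ G] (h : ℝ)
    (p v : E) (F : E → G) (a : ℤ) (k : ℕ) :
    (centralDiff h 1)^[k] (fun n : ℤ => if Odd (n + a) then F (p + n • v) else 0) =
      fun n => if Odd (n + a + k) then (centralDiff h v)^[k] F (p + n • v) else 0 := by
  induction k with
  | zero => simp
  | succ k ih =>
    funext n
    have parity_succ : Odd (n + 1 + a + k) ↔ Odd (n + a + (k + 1 : ℕ)) := by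
      simp only [Int.odd_iff]; omega
    have parity_pred : Odd (n - 1 + a + k) ↔ Odd (n + a + (k + 1 : ℕ)) := by
      simp only [Int.odd_iff]; omega
    simp only [Function.iterate_succ_apply', ih, centralDiff, parity_succ, parity_pred, add_smul,
      sub_smul, one_smul, ← add_assoc, ← add_sub_assoc]
    split_ifs
    · rfl
    · simp

theorem exists_norm_le_of_periodic_prod [SeminormedAddGroup G] {F : ℝ × ℝ → G}
    (hF : Continuous F) {S T : ℝ} (hS : 0 < S) (hT : 0 < T)
    (hperS : Function.Periodic F (S, 0)) (hperT : Function.Periodic F (0, T)) :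
    ∃ B, ∀ p, ‖F p‖ ≤ B := by
  obtain ⟨B, hB⟩ := (isCompact_Icc.prod isCompact_Icc).exists_bound_of_continuousOn
    (s := Set.Icc 0 S ×ˢ Set.Icc 0 T) hF.continuousOn
  refine ⟨B, fun ⟨x, y⟩ => ?_⟩
  obtain ⟨x', hx', hxx'⟩ := Function.Periodic.exists_mem_Ico₀ (f := fun x => F (x, y))
    (fun x => by simpa using hperS (x, y)) hS x
  obtain ⟨y', hy', hyy'⟩ := Function.Periodic.exists_mem_Ico₀ (f := fun y => F (x', y))
    (fun y => by simpa using hperT (x', y)) hT y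
  rw [hxx', hyy']
  exact hB _ ⟨Set.Ico_subset_Icc_self hx', Set.Ico_subset_Icc_self hy'⟩

variable [NormedAddCommGroup E] [NormedSpace ℝ E] [NormedAddCommGroup G] [NormedSpace ℝ G]

theorem contDiff_centralDiff {F : E → G} {k : WithTop ℕ∞} (hF : ContDiff ℝ k F) (h : ℝ) (v : E) :
    ContDiff ℝ k (centralDiff h v F) := by
  unfold centralDiff
  fun_prop

theorem iteratedFDeriv_centralDiff {F : E → G} {k : ℕ} (hF : ContDiff ℝ k F) (h : ℝ) (v p : E) :
    iteratedFDeriv ℝ k (centralDiff h v F) p = centralDiff h v (iteratedFDeriv ℝ k F) p := by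
  have hadd : ContDiff ℝ k fun q => F (q + v) := by fun_prop
  have hsub : ContDiff ℝ k fun q => F (q - v) := by fun_prop
  unfold centralDiff
  rw [iteratedFDeriv_const_smul_apply' (hadd.sub hsub).contDiffAt,
    fun_iteratedFDeriv_sub_apply hadd.contDiffAt hsub.contDiffAt, iteratedFDeriv_comp_add_right,
    iteratedFDeriv_comp_sub]

theorem norm_centralDiff_le {F : E → G} (hF : Differentiable ℝ F) {B : ℝ}
    (hB : ∀ p, ‖fderiv ℝ F p‖ ≤ B) (h : ℝ) (v p : E) :
    ‖centralDiff h (h • v) F p‖ ≤ B * ‖v‖ := by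
  have hB0 : 0 ≤ B := (norm_nonneg _).trans (hB p)
  have mean_value : ‖F (p + h • v) - F (p - h • v)‖ ≤ B * ‖(2 * h) • v‖ := by
    convert convex_univ.norm_image_sub_le_of_norm_fderiv_le (𝕜 := ℝ) (fun q _ => hF q)
      (fun q _ => hB q) (Set.mem_univ (p - h • v)) (Set.mem_univ (p + h • v)) using 3
    module
  calc ‖centralDiff h (h • v) F p‖ ≤ ‖2 * h‖⁻¹ * (B * (‖2 * h‖ * ‖v‖)) := by
        rw [centralDiff, norm_smul, norm_inv, ← norm_smul]
        gcongr
    _ = ‖2 * h‖⁻¹ * ‖2 * h‖ * (B * ‖v‖) := by ring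
    _ ≤ B * ‖v‖ := mul_le_of_le_one_left (by positivity) inv_mul_le_one

theorem norm_centralDiff_iterate_le {F : E → G} {k : ℕ} (hF : ContDiff ℝ k F) {B : ℝ}
    (hB : ∀ p, ‖iteratedFDeriv ℝ k F p‖ ≤ B) (h : ℝ) (v p : E) :
    ‖(centralDiff h (h • v))^[k] F p‖ ≤ B * ‖v‖ ^ k := by
  induction k generalizing F B with
  | zero => simpa using hB p
  | succ k ih =>
    have hFk : ContDiff ℝ k F := hF.of_le (by exact_mod_cast k.le_succ)
    have hdiff : Differentiable ℝ (iteratedFDeriv ℝ k F) :=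
      hF.differentiable_iteratedFDeriv (by exact_mod_cast k.lt_succ_self)
    rw [Function.iterate_succ_apply, pow_succ', ← mul_assoc]
    refine ih (contDiff_centralDiff hFk h (h • v)) fun q => ?_
    rw [iteratedFDeriv_centralDiff hFk]
    exact norm_centralDiff_le hdiff (fun q => norm_fderiv_iteratedFDeriv.trans_le (hB q)) h v q

theorem norm_centralDiff_iterate_ite_odd_le {F : E → G} {k : ℕ} (hF : ContDiff ℝ k F) {B : ℝ}
    (hB : ∀ p, ‖iteratedFDeriv ℝ k F p‖ ≤ B) (h : ℝ) (p v : E) (a n : ℤ) :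
    ‖(centralDiff h 1)^[k] (fun n : ℤ => if Odd (n + a) then F (p + n • h • v) else 0) n‖ ≤
      B * ‖v‖ ^ k := by
  have hB0 : 0 ≤ B := (norm_nonneg _).trans (hB 0)
  simp only [centralDiff_iterate_ite_odd]
  split_ifs
  · exact norm_centralDiff_iterate_le hF hB h v _
  · rw [norm_zero]
    positivity

theorem iteratedFDeriv_periodic {F : E → G} {c : E} (hF : Function.Periodic F c) (k : ℕ) :
    Function.Periodic (iteratedFDeriv ℝ k F) c := fun p => by
  rw [← iteratedFDeriv_comp_add_right, hF.funext]

theorem exists_norm_iteratedFDeriv_le_of_periodic_prod {F : ℝ × ℝ → G} {k : ℕ}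
    (hF : ContDiff ℝ k F) {S T : ℝ} (hS : 0 < S) (hT : 0 < T)
    (hperS : Function.Periodic F (S, 0)) (hperT : Function.Periodic F (0, T)) :
    ∃ B, ∀ p, ‖iteratedFDeriv ℝ k F p‖ ≤ B :=
  exists_norm_le_of_periodic_prod (hF.continuous_iteratedFDeriv le_rfl) hS hT
    (iteratedFDeriv_periodic hperS k) (iteratedFDeriv_periodic hperT k)

end CentralDiff

section FilterBounds

theorem exists_norm_le_mul_sub_pow {G : Type*} [NormedAddCommGroup G] [NormedSpace ℝ G]
    {g : ℝ → G} {n : ℕ} (hg : ContDiff ℝ n g) {a b : ℝ} (hab : a < b)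
    (ha : ∀ i < n, iteratedDeriv i g a = 0) :
    ∃ K, ∀ x ∈ Set.Icc a b, ‖g x‖ ≤ K * (x - a) ^ n := by
  cases n with
  | zero =>
    simpa using isCompact_Icc.exists_bound_of_continuousOn (s := Set.Icc a b)
      hg.continuous.continuousOn
  | succ n =>
    obtain ⟨K, hK⟩ := exists_taylor_mean_remainder_bound hab.le
      (show ContDiffOn ℝ (n + 1) g (Set.Icc a b) by exact_mod_cast hg.contDiffOn)
    have taylor_eq_zero (x : ℝ) : taylorWithinEval g n (Set.Icc a b) a x = 0 := by
      rw [taylor_within_apply]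
      refine sum_eq_zero fun i hi => ?_
      have hin : i < n + 1 := mem_range.1 hi
      rw [iteratedDerivWithin_eq_iteratedDeriv (uniqueDiffOn_Icc hab)
        (hg.of_le (by exact_mod_cast hin.le)).contDiffAt (Set.left_mem_Icc.2 hab.le), ha i hin,
        smul_zero]
    exact ⟨K, fun x hx => by simpa only [taylor_eq_zero, sub_zero] using hK x hx⟩

theorem abs_mul_pi_sub_abs_le {x : ℝ} (hx : |x| ≤ Real.pi) :
    |x| * (Real.pi - |x|) ≤ Real.pi ^ 2 / 2 * |Real.sin x| := by
  have hsin : |Real.sin (Real.pi - |x|)| = |Real.sin x| := by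
    rw [Real.sin_pi_sub]
    rcases abs_choice x with h | h <;> simp [h]
  have jordan {y : ℝ} (hy : |y| ≤ Real.pi / 2) : Real.pi * |y| ≤ Real.pi ^ 2 / 2 * |Real.sin y| :=
    calc Real.pi * |y| = Real.pi ^ 2 / 2 * (2 / Real.pi * |y|) := by field_simp
      _ ≤ Real.pi ^ 2 / 2 * |Real.sin y| := by gcongr; exact Real.mul_abs_le_abs_sin hy
  have hx0 := abs_nonneg x
  rcases le_total |x| (Real.pi / 2) with hle | hge
  · nlinarith [jordan hle]
  · have hy : abs (Real.pi - |x|) = Real.pi - |x| := abs_of_nonneg (by linarith)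
    have := jordan (y := Real.pi - |x|) (by linarith)
    rw [hsin, hy] at this
    nlinarith

variable {ρ : ℝ → ℝ} {n : ℕ}

theorem exists_abs_le_mul_pi_sub_abs_pow (hρ : ContDiff ℝ n ρ)
    (hpi : ∀ i < n, iteratedDeriv i ρ Real.pi = 0)
    (hneg : ∀ i < n, iteratedDeriv i ρ (-Real.pi) = 0) :
    ∃ K, 0 ≤ K ∧ ∀ x, |x| ≤ Real.pi → |ρ x| ≤ K * (Real.pi - |x|) ^ n := by
  obtain ⟨K₁, hK₁⟩ := exists_norm_le_mul_sub_pow hρ (neg_lt_zero.2 Real.pi_pos) hneg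
  obtain ⟨K₂, hK₂⟩ := exists_norm_le_mul_sub_pow (g := fun x => ρ (-x)) (hρ.comp contDiff_neg)
    (neg_lt_zero.2 Real.pi_pos) fun i hi => by
      rw [iteratedDeriv_comp_neg, neg_neg, hpi i hi, smul_zero]
  refine ⟨max 0 (max K₁ K₂), le_max_left _ _, fun x hx => ?_⟩
  have hy : 0 ≤ (Real.pi - |x|) ^ n := pow_nonneg (sub_nonneg.2 hx) n
  rcases le_total x 0 with hx0 | hx0
  · calc |ρ x| ≤ K₁ * (x - -Real.pi) ^ n := hK₁ x ⟨(abs_le.1 hx).1, hx0⟩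
      _ = K₁ * (Real.pi - |x|) ^ n := by rw [abs_of_nonpos hx0]; ring
      _ ≤ max 0 (max K₁ K₂) * (Real.pi - |x|) ^ n := mul_le_mul_of_nonneg_right (by simp) hy
  · calc |ρ x| = |ρ (- -x)| := by rw [neg_neg]
      _ ≤ K₂ * (-x - -Real.pi) ^ n := hK₂ (-x) ⟨neg_le_neg (abs_le.1 hx).2, neg_nonpos.2 hx0⟩
      _ = K₂ * (Real.pi - |x|) ^ n := by rw [abs_of_nonneg hx0]; ring
      _ ≤ max 0 (max K₁ K₂) * (Real.pi - |x|) ^ n := mul_le_mul_of_nonneg_right (by simp) hy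

theorem exists_pow_mul_abs_le_abs_sin_pow (hρ : ContDiff ℝ n ρ)
    (hpi : ∀ i < n, iteratedDeriv i ρ Real.pi = 0)
    (hneg : ∀ i < n, iteratedDeriv i ρ (-Real.pi) = 0) :
    ∃ C, 0 ≤ C ∧ ∀ x, |x| ≤ Real.pi → |x| ^ n * |ρ x| ≤ C * |Real.sin x| ^ n := by
  obtain ⟨K, hK0, hK⟩ := exists_abs_le_mul_pi_sub_abs_pow hρ hpi hneg
  refine ⟨K * (Real.pi ^ 2 / 2) ^ n, by positivity, fun x hx => ?_⟩
  calc |x| ^ n * |ρ x| ≤ |x| ^ n * (K * (Real.pi - |x|) ^ n) := by gcongr; exact hK x hx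
    _ = K * (|x| * (Real.pi - |x|)) ^ n := by rw [mul_pow]; ring
    _ ≤ K * (Real.pi ^ 2 / 2 * |Real.sin x|) ^ n :=
      mul_le_mul_of_nonneg_left
        (pow_le_pow_left₀ (mul_nonneg (abs_nonneg x) (sub_nonneg.2 hx))
          (abs_mul_pi_sub_abs_le hx) n) hK0
    _ = K * (Real.pi ^ 2 / 2) ^ n * |Real.sin x| ^ n := by rw [mul_pow]; ring

theorem exists_pow_mul_abs_pow_le_abs_sin_pow (hρ : ContDiff ℝ n ρ)
    (hpi : ∀ i < n, iteratedDeriv i ρ Real.pi = 0)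
    (hneg : ∀ i < n, iteratedDeriv i ρ (-Real.pi) = 0) :
    ∃ C, 0 ≤ C ∧ ∀ x, |x| ≤ Real.pi → |x| ^ n * |ρ x| ^ n ≤ C * |Real.sin x| ^ n := by
  cases n with
  | zero => exact ⟨1, by simp⟩
  | succ n =>
    obtain ⟨C, hC0, hC⟩ := exists_pow_mul_abs_le_abs_sin_pow (n := 1)
      (hρ.of_le (by exact_mod_cast n.succ_pos)) (fun i hi => hpi i (by omega))
      (fun i hi => hneg i (by omega))
    refine ⟨C ^ (n + 1), by positivity, fun x hx => ?_⟩
    simp only [pow_one] at hC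
    rw [← mul_pow, ← mul_pow]
    exact pow_le_pow_left₀ (by positivity) (hC x hx) _

end FilterBounds

section GridExponentials

/-- The discrete exponential `j ↦ exp (i m α_j)` of frequency `m`. -/
def gridExp (N m j : ℤ) : ℂ :=
  Complex.exp (Complex.I * m * gridPt N j)

variable {N : ℤ}

theorem gridExp_add_right (m i j : ℤ) : gridExp N m (i + j) = gridExp N m i * gridExp N m j := by
  rw [gridExp, gridExp, gridExp, ← Complex.exp_add, gridPt, gridPt, gridPt]
  push_cast
  ring_nf

theorem gridExp_comm (m j : ℤ) : gridExp N m j = gridExp N j m := by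
  simp only [gridExp, gridPt, Complex.ofReal_mul, Complex.ofReal_intCast]
  ring_nf

theorem gridExp_add_left (m n j : ℤ) : gridExp N (m + n) j = gridExp N m j * gridExp N n j := by
  simp only [gridExp_comm _ j, gridExp_add_right]

theorem gridExp_neg_left (m j : ℤ) :
    gridExp N (-m) j = Complex.exp (-(Complex.I * m * gridPt N j)) := by
  rw [gridExp]
  push_cast
  ring_nf

theorem conj_gridExp (m j : ℤ) : starRingEnd ℂ (gridExp N m j) = gridExp N (-m) j := by
  rw [gridExp_neg_left, gridExp, ← Complex.exp_conj]
  simp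

theorem gridExp_eq_one_iff (hN : N ≠ 0) (m j : ℤ) : gridExp N m j = 1 ↔ N ∣ m * j := by
  have hN' : (N : ℂ) ≠ 0 := Int.cast_ne_zero.2 hN
  have hpi : (2 * Real.pi * Complex.I : ℂ) ≠ 0 := Complex.two_pi_I_ne_zero
  have exponent_eq : Complex.I * m * gridPt N j = (m * j : ℤ) / N * (2 * Real.pi * Complex.I) := by
    simp only [gridPt, hgrid]
    push_cast
    ring
  rw [gridExp, exponent_eq, Complex.exp_eq_one_iff]
  refine exists_congr fun n => ?_
  rw [mul_left_inj' hpi, div_eq_iff hN', mul_comm (n : ℂ)]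
  exact_mod_cast Iff.rfl

theorem gridExp_periodic (hN : N ≠ 0) (m : ℤ) : Function.Periodic (gridExp N m) N := fun j => by
  rw [gridExp_add_right, (gridExp_eq_one_iff hN m N).2 (dvd_mul_left N m), mul_one]

theorem card_idxs (hN : 0 < N) (hE : Even N) : ((#(idxs N) : ℕ) : ℤ) = N := by
  obtain ⟨n, rfl⟩ := hE
  rw [idxs, Int.card_Icc, Int.toNat_of_nonneg] <;> omega

theorem sum_idxs_add_one {G : Type*} [AddCommMonoid G] (hN : 0 < N) (hE : Even N) {g : ℤ → G}
    (hg : Function.Periodic g N) : ∑ j ∈ idxs N, g (j + 1) = ∑ j ∈ idxs N, g j := by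
  obtain ⟨n, rfl⟩ := hE
  have half : (n + n) / 2 = n := by omega
  have wrap : g (n + 1) = g (-n + 1) := by rw [← hg (-n + 1)]; congr 1; ring
  have shift : ∑ j ∈ Icc (-n + 1) n, g (j + 1) = ∑ j ∈ Icc (-n + 1 + 1) (n + 1), g j := by
    rw [← map_add_right_Icc, sum_map]
    rfl
  rw [idxs, half, shift, ← insert_Icc_right_eq_Icc_add_one (by omega),
    ← insert_Icc_add_one_left_eq_Icc (a := -n + 1) (b := n) (by omega),
    sum_insert (by rw [mem_Icc]; omega), sum_insert (by rw [mem_Icc]; omega), wrap]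

theorem sum_idxs_sub_one {G : Type*} [AddCommMonoid G] (hN : 0 < N) (hE : Even N) {g : ℤ → G}
    (hg : Function.Periodic g N) : ∑ j ∈ idxs N, g (j - 1) = ∑ j ∈ idxs N, g j := by
  simpa using (sum_idxs_add_one hN hE (hg.sub_const 1)).symm

theorem sum_gridExp_sub (hN : 0 < N) (hE : Even N) {k l : ℤ} (hk : k ∈ idxs N) (hl : l ∈ idxs N) :
    ∑ j ∈ idxs N, gridExp N (k - l) j = if k = l then (N : ℂ) else 0 := by
  split_ifs with h
  · have hcard : ((#(idxs N) : ℕ) : ℂ) = N := by exact_mod_cast card_idxs hN hE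
    simp [h, gridExp, hcard]
  · have hne : gridExp N (k - l) 1 ≠ 1 := by
      rw [Ne, gridExp_eq_one_iff hN.ne', mul_one]
      intro hdvd
      rw [idxs, mem_Icc] at hk hl
      exact h (sub_eq_zero.1 (Int.eq_zero_of_abs_lt_dvd hdvd (abs_lt.2 ⟨by omega, by omega⟩)))
    have shift := sum_idxs_add_one hN hE (gridExp_periodic hN.ne' (k - l))
    simp only [gridExp_add_right, ← sum_mul] at shift
    by_contra h0
    exact hne ((mul_eq_left₀ h0).1 shift)

end GridExponentials

section DiscreteFourier

variable {N : ℤ}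

theorem dft_eq_sum_gridExp (f : ℤ → ℂ) (k : ℤ) :
    dft N f k = (N : ℂ)⁻¹ * ∑ j ∈ idxs N, f j * gridExp N (-k) j := by
  simp only [dft, gridExp_neg_left]

theorem idft_eq_sum_gridExp (c : ℤ → ℂ) (j : ℤ) :
    idft N c j = ∑ k ∈ idxs N, c k * gridExp N k j := rfl

theorem idft_periodic (hN : N ≠ 0) (c : ℤ → ℂ) : Function.Periodic (idft N c) N := fun j => by
  simp only [idft_eq_sum_gridExp, gridExp_periodic hN _ j]

theorem dft_idft (hN : 0 < N) (hE : Even N) (c : ℤ → ℂ) {k : ℤ} (hk : k ∈ idxs N) :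
    dft N (idft N c) k = c k := by
  have hN' : (N : ℂ) ≠ 0 := Int.cast_ne_zero.2 hN.ne'
  calc dft N (idft N c) k
      = (N : ℂ)⁻¹ * ∑ l ∈ idxs N, c l * ∑ j ∈ idxs N, gridExp N (l - k) j := by
        simp only [dft_eq_sum_gridExp, idft_eq_sum_gridExp, sum_mul, mul_sum, sub_eq_add_neg,
          gridExp_add_left, mul_assoc]
        rw [sum_comm]
    _ = (N : ℂ)⁻¹ * ∑ l ∈ idxs N, c l * if l = k then (N : ℂ) else 0 := by
        congr 1
        exact sum_congr rfl fun l hl => by rw [sum_gridExp_sub hN hE hl hk]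
    _ = c k := by
        simp only [mul_ite, mul_zero, sum_ite_eq', if_pos hk]
        field_simp

theorem sum_idft_mul_conj (hN : N ≠ 0) (c g : ℤ → ℂ) :
    ∑ j ∈ idxs N, idft N c j * starRingEnd ℂ (g j) =
      N * ∑ k ∈ idxs N, c k * starRingEnd ℂ (dft N g k) := by
  have hN' : (N : ℂ) ≠ 0 := Int.cast_ne_zero.2 hN
  simp only [idft_eq_sum_gridExp, dft_eq_sum_gridExp, map_mul, map_sum, map_inv₀, map_intCast,
    conj_gridExp, neg_neg, mul_sum, sum_mul]
  rw [sum_comm]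
  refine sum_congr rfl fun k _ => sum_congr rfl fun j _ => ?_
  field_simp

theorem sum_norm_idft_sq (hN : 0 < N) (hE : Even N) (c : ℤ → ℂ) :
    ∑ j ∈ idxs N, ‖idft N c j‖ ^ 2 = N * ∑ k ∈ idxs N, ‖c k‖ ^ 2 := by
  have h : ∑ j ∈ idxs N, idft N c j * starRingEnd ℂ (idft N c j) =
      N * ∑ k ∈ idxs N, c k * starRingEnd ℂ (c k) := by
    rw [sum_idft_mul_conj hN.ne']
    congr 1
    exact sum_congr rfl fun k hk => by rw [dft_idft hN hE c hk]
  simp only [Complex.mul_conj'] at h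
  exact_mod_cast h

theorem norm_dft_eq (hN : 0 < N) (f : ℤ → ℂ) (k : ℤ) :
    ‖dft N f k‖ = (N : ℝ)⁻¹ * ‖idft N (fun j => starRingEnd ℂ (f j)) k‖ := by
  have hconj : starRingEnd ℂ (dft N f k) =
      (N : ℂ)⁻¹ * idft N (fun j => starRingEnd ℂ (f j)) k := by
    simp only [dft_eq_sum_gridExp, idft_eq_sum_gridExp, map_mul, map_sum, map_inv₀, map_intCast,
      conj_gridExp, neg_neg, gridExp_comm k]
  rw [← RCLike.norm_conj, hconj, norm_mul, norm_inv, Complex.norm_intCast,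
    abs_of_pos (Int.cast_pos.2 hN)]

theorem hgrid_mul_self (hN : N ≠ 0) : hgrid N * N = 2 * Real.pi := by
  have hN' : (N : ℝ) ≠ 0 := Int.cast_ne_zero.2 hN
  rw [hgrid, div_mul_cancel₀ _ hN']

theorem hgrid_pos (hN : 0 < N) : 0 < hgrid N :=
  div_pos Real.two_pi_pos (Int.cast_pos.2 hN)

theorem l2norm_eq_sqrt_sum_dft (hN : 0 < N) (hE : Even N) (f : ℤ → ℂ) :
    l2norm N f = √(2 * Real.pi * ∑ k ∈ idxs N, ‖dft N f k‖ ^ 2) := by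
  have hN' : (N : ℝ) ≠ 0 := Int.cast_ne_zero.2 hN.ne'
  rw [l2norm, ← hgrid_mul_self hN.ne']
  simp only [norm_dft_eq hN, mul_pow, ← mul_sum, sum_norm_idft_sq hN hE, RCLike.norm_conj]
  congr 1
  field_simp

theorem l2norm_le_of_dft_le (hN : 0 < N) (hE : Even N) {f g : ℤ → ℂ} {C : ℝ} (hC : 0 ≤ C)
    (h : ∀ k ∈ idxs N, ‖dft N f k‖ ≤ C * ‖dft N g k‖) : l2norm N f ≤ C * l2norm N g := by
  rw [l2norm_eq_sqrt_sum_dft hN hE, l2norm_eq_sqrt_sum_dft hN hE]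
  refine Real.sqrt_le_iff.2 ⟨by positivity, ?_⟩
  rw [mul_pow, Real.sq_sqrt (by positivity), mul_left_comm]
  refine mul_le_mul_of_nonneg_left ?_ Real.two_pi_pos.le
  rw [mul_sum]
  refine sum_le_sum fun k hk => ?_
  rw [← mul_pow]
  exact pow_le_pow_left₀ (norm_nonneg _) (h k hk) 2

end DiscreteFourier

section SummationByParts

variable {N : ℤ}

theorem sum_mul_centralDiff (hN : 0 < N) (hE : Even N) {a b : ℤ → ℂ} (ha : Function.Periodic a N)
    (hb : Function.Periodic b N) (h : ℝ) :
    ∑ j ∈ idxs N, a j * centralDiff h 1 b j = -∑ j ∈ idxs N, centralDiff h 1 a j * b j := by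
  have shift_left : ∑ j ∈ idxs N, a j * b (j + 1) = ∑ j ∈ idxs N, a (j - 1) * b j := by
    simpa using sum_idxs_add_one hN hE ((ha.sub_const 1).mul hb)
  have shift_right : ∑ j ∈ idxs N, a j * b (j - 1) = ∑ j ∈ idxs N, a (j + 1) * b j := by
    simpa using sum_idxs_sub_one hN hE ((ha.add_const 1).mul hb)
  simp only [centralDiff, mul_smul_comm, smul_mul_assoc, ← smul_sum, mul_sub, sub_mul,
    sum_sub_distrib, shift_left, shift_right, ← smul_neg, neg_sub]

theorem sum_mul_centralDiff_iterate (hN : 0 < N) (hE : Even N) {a b : ℤ → ℂ}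
    (ha : Function.Periodic a N) (hb : Function.Periodic b N) (h : ℝ) (k : ℕ) :
    ∑ j ∈ idxs N, a j * (centralDiff h 1)^[k] b j =
      (-1) ^ k * ∑ j ∈ idxs N, (centralDiff h 1)^[k] a j * b j := by
  induction k generalizing a with
  | zero => simp
  | succ k ih =>
    have hδa : Function.Periodic (centralDiff h 1 a) N := centralDiff_iterate_periodic ha h 1 1
    simp only [Function.iterate_succ_apply' _ k b, Function.iterate_succ_apply _ k a]
    rw [sum_mul_centralDiff hN hE ha (centralDiff_iterate_periodic hb h 1 k),
      ih hδa, pow_succ]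
    ring

end SummationByParts

section KernelOperators

/-- The discrete integral operator `ψ ↦ 2 h ∑_j K i j ψ j`. The factor `2` is the weight of the
alternate-point rule, whose kernels (see `altKernel`) vanish at every second node. -/
def kernelOp (N : ℤ) (K : ℤ → ℤ → ℂ) (ψ : ℤ → ℂ) (i : ℤ) : ℂ :=
  2 * hgrid N * ∑ j ∈ idxs N, K i j * ψ j

variable {N : ℤ} {K : ℤ → ℤ → ℂ} {k : ℕ}

theorem centralDiff_iterate_kernelOp (h : ℝ) (ψ : ℤ → ℂ) (k : ℕ) :
    (centralDiff h 1)^[k] (kernelOp N K ψ) =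
      kernelOp N (fun i j => (centralDiff h 1)^[k] (fun i => K i j) i) ψ := by
  induction k with
  | zero => rfl
  | succ k ih =>
    funext i
    simp only [Function.iterate_succ_apply', ih, kernelOp, centralDiff, smul_mul_assoc, sub_mul,
      ← smul_sum, sum_sub_distrib, mul_smul_comm, mul_sub]

theorem kernelOp_centralDiff_iterate (hN : 0 < N) (hE : Even N)
    (hK : ∀ i, Function.Periodic (K i) N) {ψ : ℤ → ℂ} (hψ : Function.Periodic ψ N) (h : ℝ) (k : ℕ) :
    kernelOp N K ((centralDiff h 1)^[k] ψ) =
      kernelOp N (fun i j => (-1) ^ k * (centralDiff h 1)^[k] (K i) j) ψ := by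
  funext i
  simp only [kernelOp, sum_mul_centralDiff_iterate hN hE (hK i) hψ, mul_sum, mul_assoc]

theorem hgrid_mul_sum_norm_le (hN : 0 < N) (hE : Even N) (ψ : ℤ → ℂ) :
    hgrid N * ∑ j ∈ idxs N, ‖ψ j‖ ≤ √(2 * Real.pi) * l2norm N ψ := by
  have hcard : ((#(idxs N) : ℕ) : ℝ) = N := by exact_mod_cast card_idxs hN hE
  have cauchy_schwarz : (∑ j ∈ idxs N, ‖ψ j‖) ^ 2 ≤ N * ∑ j ∈ idxs N, ‖ψ j‖ ^ 2 := by
    simpa only [hcard] using sq_sum_le_card_mul_sum_sq (s := idxs N) (f := fun j => ‖ψ j‖)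
  rw [l2norm, ← Real.sqrt_mul Real.two_pi_pos.le]
  refine Real.le_sqrt_of_sq_le ?_
  calc (hgrid N * ∑ j ∈ idxs N, ‖ψ j‖) ^ 2
      ≤ hgrid N ^ 2 * (N * ∑ j ∈ idxs N, ‖ψ j‖ ^ 2) := by rw [mul_pow]; gcongr
    _ = hgrid N * N * (hgrid N * ∑ j ∈ idxs N, ‖ψ j‖ ^ 2) := by ring
    _ = 2 * Real.pi * (hgrid N * ∑ j ∈ idxs N, ‖ψ j‖ ^ 2) := by rw [hgrid_mul_self hN.ne']

theorem l2norm_le_of_norm_le (hN : 0 < N) (hE : Even N) {ψ : ℤ → ℂ} {M : ℝ}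
    (hψ : ∀ j, ‖ψ j‖ ≤ M) : l2norm N ψ ≤ √(2 * Real.pi) * M := by
  have hM : 0 ≤ M := (norm_nonneg _).trans (hψ 0)
  have hh := (hgrid_pos hN).le
  have hcard : ((#(idxs N) : ℕ) : ℝ) = N := by exact_mod_cast card_idxs hN hE
  rw [l2norm, ← Real.sqrt_sq hM, ← Real.sqrt_mul Real.two_pi_pos.le, ← hgrid_mul_self hN.ne',
    mul_assoc]
  refine Real.sqrt_le_sqrt (mul_le_mul_of_nonneg_left ?_ hh)
  calc ∑ j ∈ idxs N, ‖ψ j‖ ^ 2 ≤ ∑ _j ∈ idxs N, M ^ 2 := by gcongr with j; exact hψ j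
    _ = N * M ^ 2 := by rw [sum_const, nsmul_eq_mul, hcard]

theorem l2norm_kernelOp_le (hN : 0 < N) (hE : Even N) {B : ℝ} (hK : ∀ i j, ‖K i j‖ ≤ B)
    (ψ : ℤ → ℂ) : l2norm N (kernelOp N K ψ) ≤ 4 * Real.pi * B * l2norm N ψ := by
  have hB : 0 ≤ B := (norm_nonneg _).trans (hK 0 0)
  have hh := hgrid_pos hN
  have pointwise (i : ℤ) : ‖kernelOp N K ψ i‖ ≤ 2 * B * (√(2 * Real.pi) * l2norm N ψ) :=
    calc ‖kernelOp N K ψ i‖ = 2 * hgrid N * ‖∑ j ∈ idxs N, K i j * ψ j‖ := by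
          rw [kernelOp, norm_mul, norm_mul, Complex.norm_ofNat, Complex.norm_of_nonneg hh.le]
      _ ≤ 2 * hgrid N * ∑ j ∈ idxs N, B * ‖ψ j‖ := by
          gcongr
          refine norm_sum_le_of_le _ fun j _ => ?_
          rw [norm_mul]
          gcongr
          exact hK i j
      _ = 2 * B * (hgrid N * ∑ j ∈ idxs N, ‖ψ j‖) := by rw [← mul_sum]; ring
      _ ≤ 2 * B * (√(2 * Real.pi) * l2norm N ψ) :=
          mul_le_mul_of_nonneg_left (hgrid_mul_sum_norm_le hN hE ψ) (by positivity)
  calc l2norm N (kernelOp N K ψ)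
      ≤ √(2 * Real.pi) * (2 * B * (√(2 * Real.pi) * l2norm N ψ)) :=
        l2norm_le_of_norm_le hN hE pointwise
    _ = √(2 * Real.pi) ^ 2 * (2 * B * l2norm N ψ) := by ring
    _ = 4 * Real.pi * B * l2norm N ψ := by rw [Real.sq_sqrt Real.two_pi_pos.le]; ring

end KernelOperators

section AlternatePointKernels

/-- The kernel of `Rh`: the samples `f (α_i, α_j)` over the pairs with `j - i` odd, extended by
zero to the full grid. -/
def altKernel (N : ℤ) (f : ℝ × ℝ → ℂ) (i j : ℤ) : ℂ :=
  if Odd (j - i) then f (gridPt N i, gridPt N j) else 0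

variable {N : ℤ} {f : ℝ × ℝ → ℂ} {k : ℕ} {B : ℝ}

theorem Rh_eq_kernelOp (f : ℝ × ℝ → ℂ) : Rh N f = kernelOp N (altKernel N f) := by
  funext φ i
  simp only [Rh, kernelOp, altKernel, sum_filter, ite_mul, zero_mul]

theorem gridPt_add_self (hN : N ≠ 0) (i : ℤ) : gridPt N (i + N) = gridPt N i + 2 * Real.pi := by
  rw [gridPt, gridPt, Int.cast_add, add_mul, mul_comm (N : ℝ), hgrid_mul_self hN]

theorem altKernel_add_left (hN : N ≠ 0) (hE : Even N)
    (hf : Function.Periodic f (2 * Real.pi, 0)) (i j : ℤ) :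
    altKernel N f (i + N) j = altKernel N f i j := by
  have parity : Odd (j - (i + N)) ↔ Odd (j - i) := by
    rw [← sub_sub, Int.odd_sub, iff_true_right hE]
  have value := hf (gridPt N i, gridPt N j)
  rw [Prod.mk_add_mk, add_zero] at value
  simp only [altKernel, parity, gridPt_add_self hN, value]

theorem altKernel_periodic (hN : N ≠ 0) (hE : Even N)
    (hf : Function.Periodic f (0, 2 * Real.pi)) (i : ℤ) :
    Function.Periodic (altKernel N f i) N := fun j => by
  have parity : Odd (j + N - i) ↔ Odd (j - i) := by
    rw [add_sub_right_comm, Int.odd_add, iff_true_right hE]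
  have value := hf (gridPt N i, gridPt N j)
  rw [Prod.mk_add_mk, add_zero] at value
  simp only [altKernel, parity, gridPt_add_self hN, value]

theorem Rh_periodic (hN : N ≠ 0) (hE : Even N) (hf : Function.Periodic f (2 * Real.pi, 0))
    (ψ : ℤ → ℂ) : Function.Periodic (Rh N f ψ) N := fun i => by
  simp only [Rh_eq_kernelOp, kernelOp, altKernel_add_left hN hE hf]

theorem norm_centralDiff_iterate_altKernel_left_le (hf : ContDiff ℝ k f)
    (hB : ∀ p, ‖iteratedFDeriv ℝ k f p‖ ≤ B) (i j : ℤ) :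
    ‖(centralDiff (hgrid N) 1)^[k] (fun i => altKernel N f i j) i‖ ≤ B := by
  have samples_eq : (fun i => altKernel N f i j) = fun n : ℤ =>
      if Odd (n + -j) then f ((0, gridPt N j) + n • hgrid N • ((1, 0) : ℝ × ℝ)) else 0 := by
    funext n
    have parity : Odd (j - n) ↔ Odd (n + -j) := by simp only [Int.odd_iff]; omega
    simp [altKernel, parity, gridPt]
  simpa [samples_eq] using
    norm_centralDiff_iterate_ite_odd_le hf hB (hgrid N) (0, gridPt N j) (1, 0) (-j) i

theorem norm_centralDiff_iterate_altKernel_right_le (hf : ContDiff ℝ k f)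
    (hB : ∀ p, ‖iteratedFDeriv ℝ k f p‖ ≤ B) (i j : ℤ) :
    ‖(centralDiff (hgrid N) 1)^[k] (altKernel N f i) j‖ ≤ B := by
  have samples_eq : altKernel N f i = fun n : ℤ =>
      if Odd (n + -i) then f ((gridPt N i, 0) + n • hgrid N • ((0, 1) : ℝ × ℝ)) else 0 := by
    funext n
    simp [altKernel, gridPt, sub_eq_add_neg]
  simpa [samples_eq] using
    norm_centralDiff_iterate_ite_odd_le hf hB (hgrid N) (gridPt N i, 0) (0, 1) (-i) j

theorem l2norm_centralDiff_iterate_Rh_le (hN : 0 < N) (hE : Even N) (hf : ContDiff ℝ k f)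
    (hB : ∀ p, ‖iteratedFDeriv ℝ k f p‖ ≤ B) (ψ : ℤ → ℂ) :
    l2norm N ((centralDiff (hgrid N) 1)^[k] (Rh N f ψ)) ≤ 4 * Real.pi * B * l2norm N ψ := by
  rw [Rh_eq_kernelOp, centralDiff_iterate_kernelOp]
  exact l2norm_kernelOp_le hN hE (norm_centralDiff_iterate_altKernel_left_le hf hB) ψ

theorem l2norm_Rh_centralDiff_iterate_le (hN : 0 < N) (hE : Even N)
    (hper : Function.Periodic f (0, 2 * Real.pi)) (hf : ContDiff ℝ k f)
    (hB : ∀ p, ‖iteratedFDeriv ℝ k f p‖ ≤ B) {ψ : ℤ → ℂ} (hψ : Function.Periodic ψ N) :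
    l2norm N (Rh N f ((centralDiff (hgrid N) 1)^[k] ψ)) ≤ 4 * Real.pi * B * l2norm N ψ := by
  rw [Rh_eq_kernelOp, kernelOp_centralDiff_iterate hN hE (altKernel_periodic hN.ne' hE hper) hψ]
  refine l2norm_kernelOp_le hN hE (fun i j => ?_) ψ
  rw [norm_mul, norm_pow, norm_neg, norm_one, one_pow, one_mul]
  exact norm_centralDiff_iterate_altKernel_right_le hf hB i j

end AlternatePointKernels

section FourierMultipliers

variable {N : ℤ}

/-- The operator multiplying the `k`-th discrete Fourier coefficient by `σ k`, of which `Sh` and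
`Dh` are instances. -/
def fourierMultiplier (N : ℤ) (σ : ℤ → ℂ) (f : ℤ → ℂ) : ℤ → ℂ :=
  idft N fun k => σ k * dft N f k

theorem dft_fourierMultiplier_iterate (hN : 0 < N) (hE : Even N) (σ f : ℤ → ℂ) (k : ℕ) {m : ℤ}
    (hm : m ∈ idxs N) : dft N ((fourierMultiplier N σ)^[k] f) m = σ m ^ k * dft N f m := by
  induction k with
  | zero => simp
  | succ k ih =>
    rw [Function.iterate_succ_apply', fourierMultiplier, dft_idft hN hE _ hm, ih, pow_succ',
      mul_assoc]

theorem Dh_eq_fourierMultiplier (ρ : ℝ → ℝ) :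
    Dh N ρ = fourierMultiplier N fun m => Complex.I * m * ρ (gridPt N m) := rfl

theorem Sh_eq_fourierMultiplier :
    Sh N = fourierMultiplier N fun m => if m = N / 2 then 0 else Complex.I * m := by
  funext f
  simp only [Sh, fourierMultiplier, ite_mul, zero_mul]

/-- The Fourier symbol `i sin (m h) / h` of the central difference quotient with spacing `h`. -/
def diffSymbol (N m : ℤ) : ℂ :=
  Complex.I * (Real.sin (gridPt N m) / hgrid N : ℝ)

theorem diffSymbol_neg (m : ℤ) : diffSymbol N (-m) = -diffSymbol N m := by
  rw [diffSymbol, gridPt, Int.cast_neg, neg_mul, Real.sin_neg, neg_div, Complex.ofReal_neg, mul_neg]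
  rfl

theorem centralDiff_gridExp (m j : ℤ) :
    centralDiff (hgrid N) 1 (gridExp N m) j = diffSymbol N m * gridExp N m j := by
  have hexp : gridExp N m 1 - gridExp N m (-1) = 2 * Complex.I * Real.sin (gridPt N m) := by
    rw [gridExp_comm m, gridExp_comm m, gridExp_neg_left, gridExp, Int.cast_one, mul_one,
      mul_comm Complex.I, ← neg_mul, Complex.ofReal_sin, mul_right_comm, Complex.two_sin, mul_assoc,
      Complex.I_mul_I]
    ring
  rw [centralDiff, sub_eq_add_neg j, gridExp_add_right, gridExp_add_right, ← mul_sub, hexp,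
    diffSymbol, Complex.real_smul]
  push_cast
  ring

theorem centralDiff_idft (c : ℤ → ℂ) :
    centralDiff (hgrid N) 1 (idft N c) = idft N fun m => diffSymbol N m * c m := by
  funext j
  calc centralDiff (hgrid N) 1 (idft N c) j
      = ∑ m ∈ idxs N, c m * centralDiff (hgrid N) 1 (gridExp N m) j := by
        simp only [centralDiff, idft_eq_sum_gridExp, ← sum_sub_distrib, ← mul_sub, smul_sum,
          mul_smul_comm]
    _ = idft N (fun m => diffSymbol N m * c m) j := by
        simp only [centralDiff_gridExp, idft_eq_sum_gridExp, mul_left_comm, mul_assoc]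

theorem centralDiff_iterate_idft (c : ℤ → ℂ) (k : ℕ) :
    (centralDiff (hgrid N) 1)^[k] (idft N c) = idft N fun m => diffSymbol N m ^ k * c m := by
  induction k with
  | zero => simp
  | succ k ih =>
    simp only [Function.iterate_succ_apply', ih, centralDiff_idft, pow_succ', mul_assoc]

theorem dft_centralDiff_iterate (hN : 0 < N) (hE : Even N) {g : ℤ → ℂ}
    (hg : Function.Periodic g N) (k : ℕ) (m : ℤ) :
    dft N ((centralDiff (hgrid N) 1)^[k] g) m = diffSymbol N m ^ k * dft N g m := by
  induction k with
  | zero => simp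
  | succ k ih =>
    have hgk := centralDiff_iterate_periodic hg (hgrid N) 1 k
    rw [Function.iterate_succ_apply', pow_succ', mul_assoc, ← ih, dft_eq_sum_gridExp,
      dft_eq_sum_gridExp]
    simp only [mul_comm _ (gridExp N _ _)]
    rw [sum_mul_centralDiff hN hE (gridExp_periodic hN.ne' (-m)) hgk]
    simp only [centralDiff_gridExp, diffSymbol_neg, neg_mul, sum_neg_distrib, neg_neg, mul_assoc,
      ← mul_sum, mul_left_comm]

theorem norm_diffSymbol (hN : 0 < N) (m : ℤ) :
    ‖diffSymbol N m‖ = |Real.sin (gridPt N m)| / hgrid N := by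
  rw [diffSymbol, norm_mul, Complex.norm_I, one_mul, Complex.norm_real, Real.norm_eq_abs, abs_div,
    abs_of_pos (hgrid_pos hN)]

theorem abs_gridPt_le (hN : 0 < N) {m : ℤ} (hm : m ∈ idxs N) : |gridPt N m| ≤ Real.pi := by
  have hm2 : |m| * 2 ≤ N := by
    rw [idxs, mem_Icc] at hm
    have : |m| ≤ N / 2 := abs_le.2 ⟨by omega, hm.2⟩
    omega
  have hm2' : |(m : ℝ)| * 2 ≤ N := by exact_mod_cast hm2
  have hh := hgrid_pos hN
  calc |gridPt N m| = |(m : ℝ)| * 2 * hgrid N / 2 := by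
        rw [gridPt, abs_mul, abs_of_pos hh]; ring
    _ ≤ N * hgrid N / 2 := by gcongr
    _ = Real.pi := by rw [mul_comm, hgrid_mul_self hN.ne']; ring

theorem abs_pow_mul_le_norm_diffSymbol_pow (hN : 0 < N) {w : ℝ → ℝ} {C : ℝ} {k : ℕ}
    (hw : ∀ x, |x| ≤ Real.pi → |x| ^ k * w x ≤ C * |Real.sin x| ^ k) {m : ℤ} (hm : m ∈ idxs N) :
    |(m : ℝ)| ^ k * w (gridPt N m) ≤ C * ‖diffSymbol N m‖ ^ k := by
  have hh := hgrid_pos hN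
  rw [norm_diffSymbol hN, div_pow, ← mul_div_assoc, le_div_iff₀ (pow_pos hh k)]
  calc |(m : ℝ)| ^ k * w (gridPt N m) * hgrid N ^ k
      = |gridPt N m| ^ k * w (gridPt N m) := by
        rw [gridPt, abs_mul, abs_of_pos hh, mul_pow]; ring
    _ ≤ C * |Real.sin (gridPt N m)| ^ k := hw _ (abs_gridPt_le hN hm)

variable {ρ : ℝ → ℝ} {C : ℝ} {k : ℕ}

theorem l2norm_Dh_iterate_le (hN : 0 < N) (hE : Even N) (hC : 0 ≤ C)
    (hρ : ∀ x, |x| ≤ Real.pi → |x| ^ k * |ρ x| ^ k ≤ C * |Real.sin x| ^ k) {g : ℤ → ℂ}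
    (hg : Function.Periodic g N) :
    l2norm N ((Dh N ρ)^[k] g) ≤ C * l2norm N ((centralDiff (hgrid N) 1)^[k] g) := by
  refine l2norm_le_of_dft_le hN hE hC fun m hm => ?_
  rw [Dh_eq_fourierMultiplier, dft_fourierMultiplier_iterate hN hE _ _ _ hm,
    dft_centralDiff_iterate hN hE hg, norm_mul, norm_mul, ← mul_assoc]
  gcongr
  simpa [mul_pow] using abs_pow_mul_le_norm_diffSymbol_pow hN (w := fun x => |ρ x| ^ k) hρ hm

theorem exists_centralDiff_iterate_eq_idft (hN : 0 < N) (hE : Even N) (hC : 0 ≤ C) {c φ : ℤ → ℂ}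
    (hc : ∀ m ∈ idxs N, ‖c m‖ ≤ C * ‖diffSymbol N m‖ ^ k * ‖dft N φ m‖) :
    ∃ ψ, Function.Periodic ψ N ∧ (centralDiff (hgrid N) 1)^[k] ψ = idft N c ∧
      l2norm N ψ ≤ C * l2norm N φ := by
  refine ⟨idft N fun m => c m / diffSymbol N m ^ k, idft_periodic hN.ne' _, ?_,
    l2norm_le_of_dft_le hN hE hC fun m hm => ?_⟩
  · rw [centralDiff_iterate_idft]
    funext j
    simp only [idft_eq_sum_gridExp]
    refine sum_congr rfl fun m hm => ?_
    have hvanish : diffSymbol N m ^ k = 0 → c m = 0 := fun h0 => by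
      have := hc m hm
      rw [← norm_pow, h0] at this
      simpa using this
    rw [mul_div_cancel_of_imp' hvanish]
  · rw [dft_idft hN hE _ hm, norm_div, norm_pow]
    refine div_le_of_le_mul₀ (by positivity) (by positivity) ?_
    calc ‖c m‖ ≤ C * ‖diffSymbol N m‖ ^ k * ‖dft N φ m‖ := hc m hm
      _ = C * ‖dft N φ m‖ * ‖diffSymbol N m‖ ^ k := by ring

theorem exists_centralDiff_iterate_eq_filterP_Sh (hN : 0 < N) (hE : Even N) (hC : 0 ≤ C)
    (hρ : ∀ x, |x| ≤ Real.pi → |x| ^ k * |ρ x| ≤ C * |Real.sin x| ^ k) (φ : ℤ → ℂ) :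
    ∃ ψ, Function.Periodic ψ N ∧
      (centralDiff (hgrid N) 1)^[k] ψ = filterP N ρ ((Sh N)^[k] φ) ∧
      l2norm N ψ ≤ C * l2norm N φ := by
  refine exists_centralDiff_iterate_eq_idft hN hE hC fun m hm => ?_
  have norm_symbol_le : ‖if m = N / 2 then 0 else Complex.I * (m : ℂ)‖ ≤ |(m : ℝ)| := by
    split_ifs <;> simp
  rw [Sh_eq_fourierMultiplier, dft_fourierMultiplier_iterate hN hE _ _ _ hm, norm_mul, norm_mul,
    norm_pow, Complex.norm_real, ← mul_assoc]
  refine mul_le_mul_of_nonneg_right ?_ (norm_nonneg _)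
  calc ‖ρ (gridPt N m)‖ * ‖if m = N / 2 then 0 else Complex.I * (m : ℂ)‖ ^ k
      ≤ ‖ρ (gridPt N m)‖ * |(m : ℝ)| ^ k := by gcongr
    _ = |(m : ℝ)| ^ k * |ρ (gridPt N m)| := mul_comm _ _
    _ ≤ C * ‖diffSymbol N m‖ ^ k :=
      abs_pow_mul_le_norm_diffSymbol_pow hN (w := fun x => |ρ x|) hρ hm

end FourierMultipliers

section FilteredSmoothing

variable {f : ℝ × ℝ → ℂ} {ρ : ℝ → ℝ} {k : ℕ}

theorem exists_l2norm_Dh_iterate_Rh_filterP_le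
    (hper1 : Function.Periodic f (2 * Real.pi, 0)) (hper2 : Function.Periodic f (0, 2 * Real.pi))
    (hf : ContDiff ℝ k f) (hρ : ContDiff ℝ k ρ)
    (hpi : ∀ i < k, iteratedDeriv i ρ Real.pi = 0)
    (hneg : ∀ i < k, iteratedDeriv i ρ (-Real.pi) = 0) :
    ∃ c, ∀ N : ℤ, 0 < N → Even N → ∀ φ : ℤ → ℂ,
      l2norm N ((Dh N ρ)^[k] (Rh N f (filterP N ρ φ))) ≤ c * l2norm N φ := by
  obtain ⟨B, hB⟩ := exists_norm_iteratedFDeriv_le_of_periodic_prod hf Real.two_pi_pos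
    Real.two_pi_pos hper1 hper2
  have hB0 : 0 ≤ B := (norm_nonneg _).trans (hB 0)
  obtain ⟨C₀, hC₀, hρ₀⟩ := exists_pow_mul_abs_le_abs_sin_pow (n := 0) (hρ.of_le (by simp))
    (by simp) (by simp)
  obtain ⟨C, hC, hρk⟩ := exists_pow_mul_abs_pow_le_abs_sin_pow hρ hpi hneg
  refine ⟨C * (4 * Real.pi * B * C₀), fun N hN hE φ => ?_⟩
  obtain ⟨ψ, -, hψ, hψφ⟩ := exists_centralDiff_iterate_eq_filterP_Sh hN hE hC₀ hρ₀ φ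
  simp only [Function.iterate_zero_apply] at hψ
  calc l2norm N ((Dh N ρ)^[k] (Rh N f (filterP N ρ φ)))
      ≤ C * l2norm N ((centralDiff (hgrid N) 1)^[k] (Rh N f ψ)) := by
        rw [← hψ]
        exact l2norm_Dh_iterate_le hN hE hC hρk (Rh_periodic hN.ne' hE hper1 ψ)
    _ ≤ C * (4 * Real.pi * B * l2norm N ψ) := by
        gcongr
        exact l2norm_centralDiff_iterate_Rh_le hN hE hf hB ψ
    _ ≤ C * (4 * Real.pi * B * (C₀ * l2norm N φ)) := by gcongr
    _ = C * (4 * Real.pi * B * C₀) * l2norm N φ := by ring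

theorem exists_l2norm_Rh_filterP_Sh_iterate_le
    (hper1 : Function.Periodic f (2 * Real.pi, 0)) (hper2 : Function.Periodic f (0, 2 * Real.pi))
    (hf : ContDiff ℝ k f) (hρ : ContDiff ℝ k ρ)
    (hpi : ∀ i < k, iteratedDeriv i ρ Real.pi = 0)
    (hneg : ∀ i < k, iteratedDeriv i ρ (-Real.pi) = 0) :
    ∃ c, ∀ N : ℤ, 0 < N → Even N → ∀ φ : ℤ → ℂ,
      l2norm N (Rh N f (filterP N ρ ((Sh N)^[k] φ))) ≤ c * l2norm N φ := by
  obtain ⟨B, hB⟩ := exists_norm_iteratedFDeriv_le_of_periodic_prod hf Real.two_pi_pos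
    Real.two_pi_pos hper1 hper2
  have hB0 : 0 ≤ B := (norm_nonneg _).trans (hB 0)
  obtain ⟨C, hC, hρk⟩ := exists_pow_mul_abs_le_abs_sin_pow hρ hpi hneg
  refine ⟨4 * Real.pi * B * C, fun N hN hE φ => ?_⟩
  obtain ⟨ψ, hψN, hψ, hψφ⟩ := exists_centralDiff_iterate_eq_filterP_Sh hN hE hC hρk φ
  calc l2norm N (Rh N f (filterP N ρ ((Sh N)^[k] φ)))
      ≤ 4 * Real.pi * B * l2norm N ψ := by
        rw [← hψ]
        exact l2norm_Rh_centralDiff_iterate_le hN hE hper2 hf hB hψN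
    _ ≤ 4 * Real.pi * B * (C * l2norm N φ) := by gcongr
    _ = 4 * Real.pi * B * C * l2norm N φ := by ring

theorem Rh_filtered_smoothing_general {n : ℕ}
    (hper1 : Function.Periodic f (2 * Real.pi, 0)) (hper2 : Function.Periodic f (0, 2 * Real.pi))
    (hf : ContDiff ℝ n f) (hρ : ContDiff ℝ n ρ)
    (hpi : ∀ i < n, iteratedDeriv i ρ Real.pi = 0)
    (hneg : ∀ i < n, iteratedDeriv i ρ (-Real.pi) = 0) :
    ∃ c, 0 < c ∧ ∀ N : ℤ, 0 < N → Even N → ∀ φ : ℤ → ℂ, ∀ k ≤ n,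
      l2norm N ((Dh N ρ)^[k] (Rh N f (filterP N ρ φ))) ≤ c * l2norm N φ ∧
      l2norm N (Rh N f (filterP N ρ ((Sh N)^[k] φ))) ≤ c * l2norm N φ := by
  have each_order (k : ℕ) (hk : k ≤ n) : ∀ᶠ c : ℝ in Filter.atTop,
      ∀ N : ℤ, 0 < N → Even N → ∀ φ : ℤ → ℂ,
        l2norm N ((Dh N ρ)^[k] (Rh N f (filterP N ρ φ))) ≤ c * l2norm N φ ∧
        l2norm N (Rh N f (filterP N ρ ((Sh N)^[k] φ))) ≤ c * l2norm N φ := by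
    have hfk : ContDiff ℝ k f := hf.of_le (by exact_mod_cast hk)
    have hρk : ContDiff ℝ k ρ := hρ.of_le (by exact_mod_cast hk)
    have hpik : ∀ i < k, iteratedDeriv i ρ Real.pi = 0 := fun i hi => hpi i (hi.trans_le hk)
    have hnegk : ∀ i < k, iteratedDeriv i ρ (-Real.pi) = 0 := fun i hi => hneg i (hi.trans_le hk)
    obtain ⟨c₁, hc₁⟩ :=
      exists_l2norm_Dh_iterate_Rh_filterP_le hper1 hper2 hfk hρk hpik hnegk
    obtain ⟨c₂, hc₂⟩ :=
      exists_l2norm_Rh_filterP_Sh_iterate_le hper1 hper2 hfk hρk hpik hnegk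
    filter_upwards [Filter.eventually_ge_atTop c₁, Filter.eventually_ge_atTop c₂] with
      c hc₁c hc₂c N hN hE φ
    have hφ : 0 ≤ l2norm N φ := Real.sqrt_nonneg _
    exact ⟨(hc₁ N hN hE φ).trans (mul_le_mul_of_nonneg_right hc₁c hφ),
      (hc₂ N hN hE φ).trans (mul_le_mul_of_nonneg_right hc₂c hφ)⟩
  have all_orders := (Set.finite_Iic n).eventually_all.2 each_order
  obtain ⟨c, hc, hc0⟩ := (all_orders.and (Filter.eventually_gt_atTop 0)).exists
  exact ⟨c, hc0, fun N hN hE φ k hk => hc k hk N hN hE φ⟩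

theorem IsFilter.contDiff_two (hρ : IsFilter ρ) : ContDiff ℝ 2 ρ := by
  obtain ⟨r, hr, hsmooth⟩ := hρ.smooth
  exact hsmooth.of_le (by exact_mod_cast hr.le)

theorem IsFilter.iteratedDeriv_pi (hρ : IsFilter ρ) (i : ℕ) (hi : i < 2) :
    iteratedDeriv i ρ Real.pi = 0 := by
  interval_cases i
  · simpa using hρ.zero_at_pi
  · simpa using hρ.deriv_zero_at_pi

theorem IsFilter.iteratedDeriv_neg_pi (hρ : IsFilter ρ) (i : ℕ) (hi : i < 2) :
    iteratedDeriv i ρ (-Real.pi) = 0 := by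
  interval_cases i
  · simpa using hρ.zero_at_neg_pi
  · simpa using hρ.deriv_zero_at_neg_pi

end FilteredSmoothing

/-- Lemma 8.1: `R_h(φ^p)` is a second-order smoothing operator
`A_{-2}(φ)`. -/
theorem Rh_filtered_smoothing (f : ℝ × ℝ → ℂ)
    (hper1 : ∀ x y : ℝ, f (x + 2 * Real.pi, y) = f (x, y))
    (hper2 : ∀ x y : ℝ, f (x, y + 2 * Real.pi) = f (x, y))
    (hf : ContDiff ℝ 4 f) (ρ : ℝ → ℝ) (hρ : IsFilter ρ) :
    ∃ c : ℝ, 0 < c ∧ ∀ N : ℤ, 2 ≤ N → Even N → ∀ φ : ℤ → ℂ, ∀ k : ℕ, k ≤ 2 →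
      l2norm N ((Dh N ρ)^[k] (Rh N f (filterP N ρ φ))) ≤ c * l2norm N φ ∧
      l2norm N (Rh N f (filterP N ρ ((Sh N)^[k] φ))) ≤ c * l2norm N φ := by
  obtain ⟨c, hc, hbound⟩ := Rh_filtered_smoothing_general (n := 2)
    (fun ⟨x, y⟩ => by simpa using hper1 x y) (fun ⟨x, y⟩ => by simpa using hper2 x y)
    (hf.of_le (by norm_num)) hρ.contDiff_two hρ.iteratedDeriv_pi hρ.iteratedDeriv_neg_pi
  exact ⟨c, hc, fun N hN => hbound N (zero_lt_two.trans_le hN)⟩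

end
end
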